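/- arXiv:1210.7708 — 3 statements merged into one kernel-verified Lean document; each statement's English description precedes it below -/
import Mathlib

section
/- Let n ≥ 2 and 1 ≤ k ≤ n-1. Every real polynomial p of degree at most n with sup_{x∈[-1,1]}|p(x)| ≤ 1 and p^{(k+1)}(1) = 0 satisfies both |p^{(k)}(1)| ≤ T_{n-1}^{(k)}(1) and |p^{(k)}(1)| ≤ (1/(k+1))·((n−1)/(n−1+k))·T_n^{(k)}(1); equivalently μ_k^*(1) ≤ min{ T_{n-1}^{(k)}(1), (1/(k+1))·((n−1)/(n−1+k))·T_n^{(k)}(1) }. -/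
open Polynomial Set

/-- `k`-th derivative of the Chebyshev polynomial `T_m`, evaluated at `x`. -/
noncomputable def chebDeriv (m : ℤ) (k : ℕ) (x : ℝ) : ℝ :=
  (derivative^[k] (Polynomial.Chebyshev.T ℝ m)).eval x

/-- `σ_n = 2^(n-1) n! = T_n^{(n)}(1)`. -/
noncomputable def sigmaN (n : ℕ) : ℝ := 2 ^ (n - 1) * (n.factorial : ℝ)

/-- `f` is `n` times differentiable on the set `s`. -/
def NTimesDiffOn (n : ℕ) (f : ℝ → ℝ) (s : Set ℝ) : Prop :=
  ∀ i < n, DifferentiableOn ℝ (iteratedDerivWithin i f s) s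

/-- The class `W^n_∞(σ)` on `[-1,1]`. -/
def memW (n : ℕ) (σ : ℝ) (f : ℝ → ℝ) : Prop :=
  NTimesDiffOn n f (Icc (-1:ℝ) 1) ∧
  (∀ x ∈ Icc (-1:ℝ) 1, |f x| ≤ 1) ∧
  (∀ x ∈ Icc (-1:ℝ) 1, |iteratedDerivWithin n f (Icc (-1:ℝ) 1) x| ≤ σ)

/-- `m_k(x,σ) = sup { |f^{(k)}(x)| : f ∈ W^n_∞(σ) }`. -/
noncomputable def mval (n k : ℕ) (x σ : ℝ) : ℝ :=
  sSup {y | ∃ f : ℝ → ℝ, memW n σ f ∧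
    y = |iteratedDerivWithin k f (Icc (-1:ℝ) 1) x|}

/-- `m_k^*(x,σ) = sup { |f^{(k)}(x)| : f ∈ W^n_∞(σ), f^{(k+1)}(x) = 0 }`. -/
noncomputable def mstar (n k : ℕ) (x σ : ℝ) : ℝ :=
  sSup {y | ∃ f : ℝ → ℝ, memW n σ f ∧
    iteratedDerivWithin (k+1) f (Icc (-1:ℝ) 1) x = 0 ∧
    y = |iteratedDerivWithin k f (Icc (-1:ℝ) 1) x|}

/-- `μ_k(x₀)`: best constant in the pointwise Markov inequality. -/
noncomputable def muk (n k : ℕ) (x : ℝ) : ℝ :=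
  sSup {y | ∃ p : Polynomial ℝ, p.natDegree ≤ n ∧
    (∀ t ∈ Icc (-1:ℝ) 1, |p.eval t| ≤ 1) ∧
    y = |(derivative^[k] p).eval x|}

/-- `μ_k^*(x₀)`: best constant in the pointwise Schur-type inequality. -/
noncomputable def mukStar (n k : ℕ) (x : ℝ) : ℝ :=
  sSup {y | ∃ p : Polynomial ℝ, p.natDegree ≤ n ∧
    (∀ t ∈ Icc (-1:ℝ) 1, |p.eval t| ≤ 1) ∧
    (derivative^[k+1] p).eval x = 0 ∧
    y = |(derivative^[k] p).eval x|}

/-!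
Let `ω = (X² - 1) T_m'` with `m = n - 1`. A polynomial `p` of degree at most `n` is determined
modulo `ω` by its values at the extremal points of `T_m`, so the functional sending `p` to the
Wronskian of `p⁽ᵏ⁾` and `ω⁽ᵏ⁾` at `x`, which kills `ω`, is a combination of these values. Laguerre's
inequality for the derivatives of `ω / (X - t)` shows that the coefficients alternate in sign from
one node to the next; hence among the polynomials bounded by `1` the functional is largest
at `T_m`. When `p⁽ᵏ⁺¹⁾(1) = 0` its value at `x = 1` is `p⁽ᵏ⁾(1) ω⁽ᵏ⁺¹⁾(1)`, and the explicit
endpoint derivatives of `T_m` and `ω` turn this extremality into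
`(k + 1) (n - k) |p⁽ᵏ⁾(1)| ≤ n T_{n-1}⁽ᵏ⁾(1)`. This is the second bound rewritten through the ratio
of `T_n⁽ᵏ⁾(1)` to `T_{n-1}⁽ᵏ⁾(1)`, and it implies the first.
-/

section RealRooted

variable {f : ℝ[X]}

theorem splits_derivative (hf : f.Splits) : (derivative f).Splits := by
  rw [splits_iff_card_roots] at hf ⊢
  have hroots := card_roots_le_derivative f
  have hcard := card_roots' (derivative f)
  rcases Nat.eq_zero_or_pos f.natDegree with hdeg | hdeg
  · rw [eq_C_of_natDegree_eq_zero hdeg]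
    simp
  · have := natDegree_derivative_lt hdeg.ne'
    lia

theorem splits_iterate_derivative (hf : f.Splits) (k : ℕ) : (derivative^[k] f).Splits := by
  induction k with
  | zero => exact hf
  | succ k ih =>
    rw [Function.iterate_succ_apply']
    exact splits_derivative ih

theorem laguerre_inequality {R : Type*} [CommRing R] [LinearOrder R] [IsStrictOrderedRing R]
    {f : R[X]} (hf : f.Splits) (x : R) :
    f.eval x * (derivative (derivative f)).eval x ≤ (derivative f).eval x ^ 2 := by
  -- `D f = f' ^ 2 - f * f''` satisfies `D (f * g) = f ^ 2 * D g + g ^ 2 * D f`.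
  induction hf using Submonoid.closure_induction with
  | mem f hf =>
    rcases hf with ⟨a, rfl⟩ | ⟨a, rfl⟩ <;> simp
  | one => simp
  | mul f g _ _ hf hg =>
    simp only [derivative_mul, derivative_add, eval_mul, eval_add]
    linear_combination f.eval x ^ 2 * hg + g.eval x ^ 2 * hf

theorem iterate_derivative_X_sub_C_mul {R : Type*} [CommRing R] (t : R) (p : R[X]) (k : ℕ) :
    derivative^[k] ((X - C t) * p) =
      (X - C t) * derivative^[k] p + k • derivative^[k - 1] p := by
  rw [sub_mul, iterate_derivative_sub, mul_comm, iterate_derivative_mul_X,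
    iterate_derivative_C_mul]
  ring

theorem eval_wronskian_iterate_derivative_X_sub_C_mul_nonneg (hf : f.Splits) (t : ℝ) (k : ℕ)
    (x : ℝ) :
    0 ≤ (wronskian (derivative^[k] f) (derivative^[k] ((X - C t) * f))).eval x := by
  rcases k with - | k
  · suffices 0 ≤ f.eval x ^ 2 by
      convert this using 1
      simp only [wronskian, Function.iterate_zero, id_eq, derivative_mul, derivative_sub,
        derivative_X, derivative_C, sub_zero, one_mul, eval_sub, eval_mul, eval_add, eval_X, eval_C]
      ring
    positivity
  · have hlaguerre := laguerre_inequality (splits_iterate_derivative hf k) x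
    rw [iterate_derivative_X_sub_C_mul, Nat.add_sub_cancel, Function.iterate_succ_apply']
    set g := derivative^[k] f
    suffices 0 ≤ (derivative g).eval x ^ 2 + (k + 1) *
        ((derivative g).eval x ^ 2 - g.eval x * (derivative (derivative g)).eval x) by
      convert this using 1
      simp only [wronskian, nsmul_eq_mul, derivative_add, derivative_mul, derivative_sub,
        derivative_X, derivative_C, derivative_natCast, sub_zero, one_mul, zero_mul, zero_add,
        eval_sub, eval_mul, eval_add, eval_X, eval_C, eval_natCast]
      push_cast
      ring
    have := sub_nonneg.mpr hlaguerre
    positivity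

end RealRooted

section Interpolation

variable {F ι : Type*} [Field F] [DecidableEq ι] {s : Finset ι} {v : ι → F} {p : F[X]}

theorem eq_C_coeff_mul_nodal_add_interpolate (hvs : Set.InjOn v s) (hp : p.natDegree ≤ s.card) :
    p = C (p.coeff s.card) * Lagrange.nodal s v +
      Lagrange.interpolate s v (fun i => p.eval (v i)) := by
  have hmonic : (Lagrange.nodal s v).coeff s.card = 1 := by
    rw [← Lagrange.natDegree_nodal (s := s) (v := v)]
    exact Lagrange.nodal_monic
  rw [← sub_eq_iff_eq_add']
  refine Lagrange.eq_interpolate_of_eval_eq _ hvs ?_ fun i hi => by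
    simp [Lagrange.eval_nodal_at_node hi]
  rw [degree_lt_iff_coeff_zero]
  intro i hi
  rcases hi.eq_or_lt with rfl | hi
  · simp [hmonic]
  · rw [coeff_sub, coeff_C_mul, coeff_eq_zero_of_natDegree_lt (hp.trans_lt hi),
      coeff_eq_zero_of_natDegree_lt (Lagrange.natDegree_nodal.trans_lt hi), mul_zero, sub_zero]

theorem basis_eq_C_nodalWeight_mul_nodal_erase {i : ι} (hi : i ∈ s) :
    Lagrange.basis s v i = C (Lagrange.nodalWeight s v i) * Lagrange.nodal (s.erase i) v := by
  rw [Lagrange.basis_eq_prod_sub_inv_mul_nodal_div hi, Lagrange.nodal_erase_eq_nodal_div hi]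

theorem wronskian_iterate_derivative_nodal (hvs : Set.InjOn v s) (hp : p.natDegree ≤ s.card)
    (k : ℕ) :
    wronskian (derivative^[k] p) (derivative^[k] (Lagrange.nodal s v)) =
      ∑ i ∈ s, C (p.eval (v i) * Lagrange.nodalWeight s v i) *
        wronskian (derivative^[k] (Lagrange.nodal (s.erase i) v))
          (derivative^[k] (Lagrange.nodal s v)) := by
  set w := derivative^[k] (Lagrange.nodal s v) with hw
  have wronskian_C_mul (a : F) (q : F[X]) : wronskian (C a * q) w = C a * wronskian q w := by
    simp only [← smul_eq_C_mul, ← wronskianBilin_apply, map_smul, LinearMap.smul_apply]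
  conv_lhs => rw [eq_C_coeff_mul_nodal_add_interpolate hvs hp]
  rw [Lagrange.interpolate_apply, iterate_map_add, iterate_derivative_C_mul, ← hw,
    wronskian_add_left, wronskian_C_mul, wronskian_self_eq_zero, mul_zero, zero_add,
    iterate_derivative_sum, ← wronskianBilin_apply, map_sum, LinearMap.sum_apply]
  refine Finset.sum_congr rfl fun i hi => ?_
  rw [wronskianBilin_apply, basis_eq_C_nodalWeight_mul_nodal_erase hi, ← mul_assoc, ← C_mul,
    iterate_derivative_C_mul, wronskian_C_mul]

end Interpolation

section ExtremalNodal

/-- The polynomial `(X² - 1) T_m'`, whose roots for `m ≥ 1` are the `m + 1` extremal points of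
`T_m` on `[-1, 1]`. It is left unnormalised so that it satisfies the Chebyshev differential
equation in the form `derivative_extremalNodal`. -/
noncomputable def extremalNodal (m : ℤ) : ℝ[X] := (X ^ 2 - 1) * derivative (Chebyshev.T ℝ m)

theorem eval_cos_extremalNodal (m : ℤ) (θ : ℝ) :
    (extremalNodal m).eval (Real.cos θ) = -(m * Real.sin θ * Real.sin (m * θ)) := by
  have hU := Chebyshev.U_real_cos θ (m - 1)
  push_cast at hU
  rw [sub_add_cancel] at hU
  rw [← hU, extremalNodal, Chebyshev.T_derivative_eq_U]
  simp only [eval_mul, eval_sub, eval_pow, eval_X, eval_one, eval_intCast]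
  rw [Real.cos_sq']
  ring

theorem eval_node_extremalNodal (m i : ℕ) :
    (extremalNodal m).eval (Chebyshev.node m i) = 0 := by
  rcases eq_or_ne m 0 with rfl | hm
  · simp [extremalNodal]
  · have : ((m : ℤ) : ℝ) * (i * Real.pi / m) = i * Real.pi := by
      push_cast
      field_simp
    rw [Chebyshev.node, eval_cos_extremalNodal, this, Real.sin_nat_mul_pi, mul_zero, neg_zero]

theorem natDegree_extremalNodal_le (m : ℕ) : (extremalNodal m).natDegree ≤ m + 1 := by
  rcases m with - | m
  · simp [extremalNodal]
  · have hT := natDegree_derivative_le (Chebyshev.T ℝ (m + 1 : ℕ))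
    rw [Chebyshev.natDegree_T, Int.natAbs_natCast, Nat.add_sub_cancel] at hT
    refine natDegree_mul_le.trans ((add_le_add ?_ hT).trans (by lia : 2 + m ≤ _))
    compute_degree

theorem coeff_extremalNodal_nonneg (m : ℕ) : 0 ≤ (extremalNodal m).coeff (m + 1) := by
  rcases m with - | m
  · simp [extremalNodal]
  · have hdeg := Chebyshev.natDegree_T ℝ (m + 1 : ℕ)
    have hlead := Chebyshev.leadingCoeff_T ℝ (m + 1 : ℕ)
    rw [Int.natAbs_natCast] at hdeg hlead
    rw [leadingCoeff, hdeg] at hlead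
    rw [extremalNodal, sub_mul, one_mul, coeff_sub, coeff_X_pow_mul, coeff_derivative,
      coeff_derivative, hlead, coeff_eq_zero_of_natDegree_lt (by lia), zero_mul, sub_zero]
    positivity

theorem extremalNodal_eq_C_mul_nodal (m : ℕ) :
    extremalNodal m = C ((extremalNodal m).coeff (m + 1)) *
      Lagrange.nodal (Finset.range (m + 1)) (Chebyshev.node m) := by
  have h := eq_C_coeff_mul_nodal_add_interpolate (p := extremalNodal m)
    (Chebyshev.strictAntiOn_node m).injOn (by simpa using natDegree_extremalNodal_le m)
  simpa [eval_node_extremalNodal] using h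

theorem derivative_extremalNodal (m : ℤ) :
    derivative (extremalNodal m) =
      derivative (Chebyshev.T ℝ m) * X + C ((m : ℝ) ^ 2) * Chebyshev.T ℝ m := by
  have h := Chebyshev.one_sub_X_sq_mul_derivative_derivative_T_eq_poly_in_T (R := ℝ) m
  simp only [Function.iterate_succ_apply', Function.iterate_zero_apply] at h
  simp only [extremalNodal, derivative_mul, derivative_sub, derivative_X_sq, derivative_one,
    map_ofNat, map_pow, map_intCast]
  linear_combination -h

end ExtremalNodal

section WronskianExtremality

variable {m : ℕ} {p : ℝ[X]}

open Chebyshev in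
theorem eval_wronskian_nodal_le_eval_wronskian_nodal_T (hp : p.natDegree ≤ m + 1)
    (hbound : ∀ x ∈ Icc (-1 : ℝ) 1, |p.eval x| ≤ 1) (k : ℕ) (x : ℝ) :
    (wronskian (derivative^[k] p)
      (derivative^[k] (Lagrange.nodal (Finset.range (m + 1)) (node m)))).eval x ≤
    (wronskian (derivative^[k] (T ℝ m))
      (derivative^[k] (Lagrange.nodal (Finset.range (m + 1)) (node m)))).eval x := by
  set s := Finset.range (m + 1)
  let c (i : ℕ) : ℝ := Lagrange.nodalWeight s (node m) i *
    (wronskian (derivative^[k] (Lagrange.nodal (s.erase i) (node m)))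
      (derivative^[k] (Lagrange.nodal s (node m)))).eval x
  have eval_wronskian_eq_sumNodes {q : ℝ[X]} (hq : q.natDegree ≤ m + 1) :
      (wronskian (derivative^[k] q) (derivative^[k] (Lagrange.nodal s (node m)))).eval x =
        sumNodes m c q := by
    rw [wronskian_iterate_derivative_nodal (strictAntiOn_node m).injOn (by simpa [s] using hq),
      eval_finsetSum, sumNodes, ← Nat.range_succ_eq_Iic]
    simp only [eval_mul, eval_C, mul_assoc, c, s]
  have sign_alternates (i : ℕ) (hi : i ≤ m) : 0 ≤ (-1) ^ i * c i := by
    have hweight : 0 < (-1) ^ i * Lagrange.nodalWeight s (node m) i := by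
      have := inv_pos.mpr (zero_lt_prod_node_sub_node hi)
      rwa [mul_inv, ← inv_pow, inv_neg_one, ← Finset.prod_inv_distrib] at this
    have hsplits : (Lagrange.nodal (s.erase i) (node m)).Splits :=
      Splits.prod fun _ _ => Splits.X_sub_C _
    have hwronskian :=
      eval_wronskian_iterate_derivative_X_sub_C_mul_nonneg hsplits (node m i) k x
    rw [← Lagrange.nodal_eq_mul_nodal_erase (Finset.mem_range_succ_iff.mpr hi)] at hwronskian
    rw [← mul_assoc]
    exact mul_nonneg hweight.le hwronskian
  rw [eval_wronskian_eq_sumNodes hp, eval_wronskian_eq_sumNodes (by simp)]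
  exact sumNodes_le_sumNodes_T sign_alternates hbound

theorem eval_wronskian_extremalNodal_le (hp : p.natDegree ≤ m + 1)
    (hbound : ∀ x ∈ Icc (-1 : ℝ) 1, |p.eval x| ≤ 1) (k : ℕ) (x : ℝ) :
    (wronskian (derivative^[k] p) (derivative^[k] (extremalNodal m))).eval x ≤
      (wronskian (derivative^[k] (Chebyshev.T ℝ m))
        (derivative^[k] (extremalNodal m))).eval x := by
  have wronskian_C_mul (a : ℝ) (q w : ℝ[X]) : wronskian q (C a * w) = C a * wronskian q w := by
    simp only [← smul_eq_C_mul, ← wronskianBilin_apply, map_smul]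
  rw [extremalNodal_eq_C_mul_nodal]
  simp only [iterate_derivative_C_mul, wronskian_C_mul, eval_mul, eval_C]
  exact mul_le_mul_of_nonneg_left (eval_wronskian_nodal_le_eval_wronskian_nodal_T hp hbound k x)
    (coeff_extremalNodal_nonneg m)

end WronskianExtremality

section EndpointValues

theorem chebDeriv_succ_one (m : ℤ) (k : ℕ) :
    (2 * (k : ℝ) + 1) * chebDeriv m (k + 1) 1 = ((m : ℝ) ^ 2 - k ^ 2) * chebDeriv m k 1 := by
  exact_mod_cast Chebyshev.iterate_derivative_T_eval_one_recurrence (R := ℝ) m k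

theorem chebDeriv_one_pos {m k : ℕ} (h : k ≤ m) : 0 < chebDeriv m k 1 := by
  rw [chebDeriv, Chebyshev.iterate_derivative_T_eval_one_eq_div]
  push_cast
  refine div_pos (Finset.prod_pos fun l hl => ?_) (Finset.prod_pos fun l _ => by positivity)
  have : l < m := (Finset.mem_range.mp hl).trans_le h
  rw [sub_pos]
  gcongr

theorem chebDeriv_add_one_one (m : ℤ) (k : ℕ) :
    ((m : ℝ) + 1 - k) * m * chebDeriv (m + 1) k 1 = (m + 1) * (m + k) * chebDeriv m k 1 := by
  induction k with
  | zero => simp [chebDeriv]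
  | succ k ih =>
    have hm := chebDeriv_succ_one m k
    have hm' := chebDeriv_succ_one (m + 1) k
    push_cast at hm' ⊢
    refine mul_left_cancel₀ (by positivity : 2 * (k : ℝ) + 1 ≠ 0) ?_
    linear_combination ((m : ℝ) - k) * m * hm' + (m - k) * (m + 1 + k) * ih
      - (m + 1) * (m + 1 + k) * hm

theorem eval_one_iterate_derivative_succ_extremalNodal (m : ℤ) (k : ℕ) :
    (2 * (k : ℝ) + 1) * (derivative^[k + 1] (extremalNodal m)).eval 1 =
      (k + 1) * (2 * m ^ 2 + k) * chebDeriv m k 1 := by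
  have hsum : (derivative^[k + 1] (extremalNodal m)).eval 1 =
      chebDeriv m (k + 1) 1 + (k + m ^ 2) * chebDeriv m k 1 := by
    rw [Function.iterate_succ_apply, derivative_extremalNodal, iterate_map_add,
      iterate_derivative_C_mul, iterate_derivative_derivative_mul_X]
    simp only [chebDeriv, Function.iterate_succ_apply, nsmul_eq_mul, map_pow, map_intCast,
      eval_add, eval_mul, eval_X, eval_natCast, eval_pow, eval_intCast]
    ring
  rw [hsum]
  linear_combination chebDeriv_succ_one m k

theorem sq_sub_sq_mul_eval_one_iterate_derivative_succ_extremalNodal (m : ℤ) (k : ℕ) :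
    ((m : ℝ) ^ 2 - k ^ 2) * (derivative^[k + 1] (extremalNodal m)).eval 1 =
      (k + 1) * (2 * m ^ 2 + k) * chebDeriv m (k + 1) 1 := by
  refine mul_left_cancel₀ (by positivity : 2 * (k : ℝ) + 1 ≠ 0) ?_
  linear_combination ((m : ℝ) ^ 2 - k ^ 2) * eval_one_iterate_derivative_succ_extremalNodal m k
    - (k + 1) * (2 * (m : ℝ) ^ 2 + k) * chebDeriv_succ_one m k

theorem eval_one_iterate_derivative_succ_extremalNodal_pos {m k : ℕ} (hm : m ≠ 0) (h : k ≤ m) :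
    0 < (derivative^[k + 1] (extremalNodal m)).eval 1 := by
  have hD := chebDeriv_one_pos h
  refine pos_of_mul_pos_right (?_ : 0 < (2 * (k : ℝ) + 1) * _) (by positivity)
  rw [eval_one_iterate_derivative_succ_extremalNodal, Int.cast_natCast]
  positivity

end EndpointValues

section SchurInequality

variable {m k : ℕ} {p : ℝ[X]}

theorem eval_one_wronskian_iterate_derivative_T_extremalNodal_le (h : k + 1 ≤ m) :
    (k + 2) * (m - k) * (wronskian (derivative^[k + 1] (Chebyshev.T ℝ m))
      (derivative^[k + 1] (extremalNodal m))).eval 1 ≤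
    (m + 1) * chebDeriv m (k + 1) 1 * (derivative^[k + 2] (extremalNodal m)).eval 1 := by
  have ha := eval_one_iterate_derivative_succ_extremalNodal m (k + 1)
  have hb := sq_sub_sq_mul_eval_one_iterate_derivative_succ_extremalNodal m k
  have hE := chebDeriv_succ_one m (k + 1)
  simp only [wronskian, ← Function.iterate_succ_apply' derivative, eval_sub, eval_mul]
  simp only [← chebDeriv.eq_def, Nat.succ_eq_add_one, add_assoc, one_add_one_eq_two]
    at ha hb hE ⊢
  set a := (derivative^[k + 2] (extremalNodal m)).eval 1
  set b := (derivative^[k + 1] (extremalNodal m)).eval 1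
  set D := chebDeriv m (k + 1) 1
  set E := chebDeriv m (k + 2) 1
  push_cast at ha hb hE
  have hkm : (k : ℝ) + 1 ≤ m := by exact_mod_cast h
  -- The factor `(2 * k + 3) * (m + k)` lets `ha`, `hE` and `hb` express everything through `D`.
  have hdefect : (2 * k + 3) * (m + k) *
      ((m + 1) * D * a - (k + 2) * (m - k) * (D * a - E * b)) =
      (k + 2) * (k + 1) * (m - (k + 1)) * m * (2 * m - 1) * D ^ 2 := by
    linear_combination (m + k) * ((m + 1) * D - (k + 2) * (m - k) * D) * ha +
      (k + 2) * ((m ^ 2 - k ^ 2) * b * hE + (m ^ 2 - (k + 1) ^ 2) * D * hb)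
  have hdefect_nonneg : (0 : ℝ) ≤ (k + 2) * (k + 1) * (m - (k + 1)) * m * (2 * m - 1) * D ^ 2 := by
    have : (0 : ℝ) ≤ m - (k + 1) := by linarith
    have : (0 : ℝ) ≤ 2 * m - 1 := by linarith [k.cast_nonneg (α := ℝ)]
    positivity
  rw [← hdefect] at hdefect_nonneg
  have : (0 : ℝ) < (2 * k + 3) * (m + k) := by
    have : 0 < m := by lia
    positivity
  linarith [nonneg_of_mul_nonneg_right hdefect_nonneg this]

theorem mul_eval_one_iterate_derivative_le (h : k + 1 ≤ m) (hp : p.natDegree ≤ m + 1)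
    (hbound : ∀ x ∈ Icc (-1 : ℝ) 1, |p.eval x| ≤ 1)
    (hzero : (derivative^[k + 2] p).eval 1 = 0) :
    (k + 2) * (m - k) * (derivative^[k + 1] p).eval 1 ≤ (m + 1) * chebDeriv m (k + 1) 1 := by
  have hpos := eval_one_iterate_derivative_succ_extremalNodal_pos (by lia) h
  have hkm : (0 : ℝ) ≤ m - k := sub_nonneg.mpr (by exact_mod_cast (by lia : k ≤ m))
  have hwronskian : (wronskian (derivative^[k + 1] p)
      (derivative^[k + 1] (extremalNodal m))).eval 1 =
        (derivative^[k + 1] p).eval 1 * (derivative^[k + 2] (extremalNodal m)).eval 1 := by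
    simp only [wronskian, ← Function.iterate_succ_apply' derivative, eval_sub, eval_mul, hzero,
      zero_mul, sub_zero]
  refine le_of_mul_le_mul_right ?_ hpos
  calc (k + 2) * (m - k) * (derivative^[k + 1] p).eval 1 *
        (derivative^[k + 2] (extremalNodal m)).eval 1
      = (k + 2) * (m - k) * (wronskian (derivative^[k + 1] p)
          (derivative^[k + 1] (extremalNodal m))).eval 1 := by rw [hwronskian, mul_assoc]
    _ ≤ (k + 2) * (m - k) * (wronskian (derivative^[k + 1] (Chebyshev.T ℝ m))
          (derivative^[k + 1] (extremalNodal m))).eval 1 := by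
      gcongr
      exact eval_wronskian_extremalNodal_le hp hbound (k + 1) 1
    _ ≤ _ := eval_one_wronskian_iterate_derivative_T_extremalNodal_le h

theorem mul_abs_eval_one_iterate_derivative_le (h : k + 1 ≤ m) (hp : p.natDegree ≤ m + 1)
    (hbound : ∀ x ∈ Icc (-1 : ℝ) 1, |p.eval x| ≤ 1)
    (hzero : (derivative^[k + 2] p).eval 1 = 0) :
    (k + 2) * (m - k) * |(derivative^[k + 1] p).eval 1| ≤ (m + 1) * chebDeriv m (k + 1) 1 := by
  have hneg := mul_eval_one_iterate_derivative_le (p := -p) h (by rwa [natDegree_neg])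
    (by simpa using hbound) (by rw [iterate_derivative_neg, eval_neg, hzero, neg_zero])
  rw [iterate_derivative_neg, eval_neg] at hneg
  rcases abs_choice ((derivative^[k + 1] p).eval 1) with habs | habs <;> rw [habs]
  · exact mul_eval_one_iterate_derivative_le h hp hbound hzero
  · exact hneg

theorem abs_eval_one_iterate_derivative_le_chebDeriv (h : k + 1 ≤ m) (hp : p.natDegree ≤ m + 1)
    (hbound : ∀ x ∈ Icc (-1 : ℝ) 1, |p.eval x| ≤ 1)
    (hzero : (derivative^[k + 2] p).eval 1 = 0) :
    |(derivative^[k + 1] p).eval 1| ≤ chebDeriv m (k + 1) 1 := by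
  have hkm : (k : ℝ) + 1 ≤ m := by exact_mod_cast h
  have hweight : (m : ℝ) + 1 ≤ (k + 2) * (m - k) := by
    linear_combination (k + 1 : ℝ) * hkm
  refine le_of_mul_le_mul_left ?_ (by linarith : (0 : ℝ) < (k + 2) * (m - k))
  exact (mul_abs_eval_one_iterate_derivative_le h hp hbound hzero).trans
    (mul_le_mul_of_nonneg_right hweight (chebDeriv_one_pos h).le)

theorem abs_eval_one_iterate_derivative_le_mul_chebDeriv_add_one (h : k + 1 ≤ m)
    (hp : p.natDegree ≤ m + 1) (hbound : ∀ x ∈ Icc (-1 : ℝ) 1, |p.eval x| ≤ 1)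
    (hzero : (derivative^[k + 2] p).eval 1 = 0) :
    |(derivative^[k + 1] p).eval 1| ≤
      1 / (k + 2) * (m / (m + (k + 1))) * chebDeriv (m + 1) (k + 1) 1 := by
  have hkm : (k : ℝ) + 1 ≤ m := by exact_mod_cast h
  have hsub : (0 : ℝ) < m - k := by linarith
  have hm : (0 : ℝ) < m := by exact_mod_cast (by lia : 0 < m)
  have hratio := chebDeriv_add_one_one m (k + 1)
  push_cast at hratio
  calc |(derivative^[k + 1] p).eval 1|
      ≤ (m + 1) * chebDeriv m (k + 1) 1 / ((k + 2) * (m - k)) := by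
        rw [le_div_iff₀' (by positivity)]
        exact mul_abs_eval_one_iterate_derivative_le h hp hbound hzero
    _ = 1 / (k + 2) * (m / (m + (k + 1))) * chebDeriv (m + 1) (k + 1) 1 := by
        field_simp
        linear_combination -hratio

end SchurInequality

/-- the improved endpoint bounds
`μ_k^*(1) ≤ min{ T_{n-1}^{(k)}(1), (1/(k+1))·((n-1)/(n-1+k))·T_n^{(k)}(1) }`. -/
theorem schur_inequality_improved (n k : ℕ) (hn : 2 ≤ n) (hk1 : 1 ≤ k) (hk2 : k ≤ n - 1) :
    (∀ p : Polynomial ℝ, p.natDegree ≤ n → (∀ x ∈ Icc (-1:ℝ) 1, |p.eval x| ≤ 1) →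
      (derivative^[k+1] p).eval 1 = 0 →
      |(derivative^[k] p).eval 1| ≤ chebDeriv ((n:ℤ) - 1) k 1 ∧
      |(derivative^[k] p).eval 1| ≤
        (1 / ((k:ℝ) + 1)) * (((n:ℝ) - 1) / ((n:ℝ) - 1 + (k:ℝ))) * chebDeriv n k 1) ∧
    mukStar n k 1 ≤ min (chebDeriv ((n:ℤ) - 1) k 1)
      ((1 / ((k:ℝ) + 1)) * (((n:ℝ) - 1) / ((n:ℝ) - 1 + (k:ℝ))) * chebDeriv n k 1) := by
  obtain ⟨m, rfl⟩ : ∃ m, n = m + 1 := ⟨n - 1, by lia⟩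
  obtain ⟨k, rfl⟩ : ∃ j, k = j + 1 := ⟨k - 1, by lia⟩
  have hkm : k + 1 ≤ m := hk2
  have bounds (p : ℝ[X]) (hp : p.natDegree ≤ m + 1)
      (hbound : ∀ x ∈ Icc (-1 : ℝ) 1, |p.eval x| ≤ 1)
      (hzero : (derivative^[k + 2] p).eval 1 = 0) :=
    And.intro (abs_eval_one_iterate_derivative_le_chebDeriv hkm hp hbound hzero)
      (abs_eval_one_iterate_derivative_le_mul_chebDeriv_add_one hkm hp hbound hzero)
  push_cast
  simp only [add_sub_cancel_right, add_assoc, one_add_one_eq_two] at bounds ⊢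
  refine ⟨bounds, csSup_le ⟨0, 0, by simp, by simp, by simp, by simp⟩ ?_⟩
  rintro y ⟨p, hp, hbound, hzero, rfl⟩
  exact le_min_iff.mpr (bounds p hp hbound hzero)
end

section
/- Let n ≥ 3. (a) Every real polynomial p of degree at most n with sup_{x∈[-1,1]}|p(x)| ≤ 1 and p''(1) = 0 satisfies |p'(1)| ≤ (1/3)·T_n'(1). (b) Every real polynomial p of degree at most n with sup_{x∈[-1,1]}|p(x)| ≤ 1 and p'''(1) = 0 satisfies |p''(1)| ≤ (3/π²)·((π²−6)/(15−π²))·T_n''(1), and in particular |p''(1)| ≤ 0.23·T_n''(1). -/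
open Polynomial Set

/-!
Let `w = cos (π / n)` be the largest interior extremal point of `T_n`, and rescale `p` affinely
from `[-1, 1]` to `[-1, w]`. The polynomials `Q_b = T_n + b (1 + X) T_n'` take the values `±1`
alternately at the `n` extremal points of `T_n` in `[-1, w]`, and `b` can be chosen so that the
`(k + 1)`-st derivative of `Q_b` vanishes at `w`. Counting zeros with Rolle's theorem shows that,
among the polynomials of degree at most `n` that are bounded by `1` at these points and satisfy the
same condition at `w`, `Q_b` has the largest `k`-th derivative at `w`. Hence
`|p⁽ᵏ⁾(1)| ≤ ((1 + w) / 2)ᵏ |Q_b⁽ᵏ⁾(w)|`, and the differential equation of `T_n` evaluates the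
right side in terms of `n` and `w`. Relative to `T_n⁽ᵏ⁾(1)` it is largest in the limit `n → ∞`,
where `w → 1` and `n² (1 - w) → π² / 2`; this limit is the constant in the theorem.
-/

/-- The finite set of real roots of `R` that are smaller than `w`. As `roots 0 = 0`, it is empty
for `R = 0`. -/
noncomputable def rootsBelow (R : ℝ[X]) (w : ℝ) : Finset ℝ :=
  {x ∈ R.roots.toFinset | x < w}

lemma mem_rootsBelow {R : ℝ[X]} (hR : R ≠ 0) {w x : ℝ} :
    x ∈ rootsBelow R w ↔ R.eval x = 0 ∧ x < w := by
  simp [rootsBelow, hR]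

lemma card_rootsBelow_le_natDegree (R : ℝ[X]) (w : ℝ) : (rootsBelow R w).card ≤ R.natDegree :=
  (Finset.card_filter_le _ _).trans ((Multiset.toFinset_card_le _).trans R.card_roots')

lemma card_rootsBelow_lt_natDegree {R : ℝ[X]} (hR : R ≠ 0) {w : ℝ} (hw : R.eval w = 0) :
    (rootsBelow R w).card < R.natDegree := by
  have hssub : rootsBelow R w ⊂ R.roots.toFinset :=
    Finset.filter_ssubset.2 ⟨w, by simp [hR, hw], lt_irrefl w⟩
  exact (Finset.card_lt_card hssub).trans_le ((Multiset.toFinset_card_le _).trans R.card_roots')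

/-- Rolle's theorem: the right end of the ray is allowed as one of the zeros of `R`. -/
lemma card_le_card_rootsBelow_derivative_add_one {R : ℝ[X]} (hR : derivative R ≠ 0) {w : ℝ}
    {s : Finset ℝ} (hs : ∀ x ∈ s, R.eval x = 0 ∧ x ≤ w) :
    s.card ≤ (rootsBelow (derivative R) w).card + 1 := by
  refine Finset.card_le_of_interleaved fun x hx y hy hxy _ => ?_
  obtain ⟨z, ⟨hxz, hzy⟩, hz⟩ :=
    exists_deriv_eq_zero hxy R.continuousOn ((hs x hx).1.trans (hs y hy).1.symm)
  rw [Polynomial.deriv] at hz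
  exact ⟨z, (mem_rootsBelow hR).2 ⟨hz, hzy.trans_le (hs y hy).2⟩, hxz, hzy⟩

lemma card_rootsBelow_le_iterate_derivative (R : ℝ[X]) (w : ℝ) (k : ℕ)
    (hR : derivative^[k] R ≠ 0) :
    (rootsBelow R w).card ≤ (rootsBelow (derivative^[k] R) w).card + k := by
  induction k with
  | zero => simp
  | succ k ih =>
    rw [Function.iterate_succ_apply'] at hR ⊢
    have hRk : derivative^[k] R ≠ 0 := ne_of_apply_ne derivative (by rwa [derivative_zero])
    have hrolle := card_le_card_rootsBelow_derivative_add_one hR (w := w)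
      fun x hx => ((mem_rootsBelow hRk).1 hx).imp_right le_of_lt
    have := ih hRk
    omega

lemma card_rootsBelow_le_card_rootsBelow_derivative {R : ℝ[X]} (hR : derivative R ≠ 0) {w : ℝ}
    (hw : R.eval w = 0) : (rootsBelow R w).card ≤ (rootsBelow (derivative R) w).card := by
  have hR0 : R ≠ 0 := ne_of_apply_ne derivative (by rwa [derivative_zero])
  have hmem : w ∉ rootsBelow R w := fun h => lt_irrefl w ((mem_rootsBelow hR0).1 h).2
  have hrolle := card_le_card_rootsBelow_derivative_add_one hR (w := w)
    (s := insert w (rootsBelow R w)) <| by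
      rintro x hx
      rcases Finset.mem_insert.1 hx with rfl | hx
      · exact ⟨hw, le_rfl⟩
      · exact ((mem_rootsBelow hR0).1 hx).imp_right le_of_lt
  rw [Finset.card_insert_of_notMem hmem] at hrolle
  exact Nat.le_of_add_le_add_right hrolle

lemma natDegree_lt_of_iterate_derivative_eq_zero {R : ℝ[X]} (hR : R ≠ 0) {k : ℕ}
    (h : derivative^[k] R = 0) : R.natDegree < k := by
  by_contra! hk
  have hcoeff := congr_arg (coeff · (R.natDegree - k)) h
  simp [coeff_iterate_derivative, Nat.sub_add_cancel hk, hR, Nat.descFactorial_eq_zero_iff_lt,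
    hk.not_gt] at hcoeff

lemma card_rootsBelow_add_two_le {R : ℝ[X]} (hR : R ≠ 0) {n k : ℕ} (hn : R.natDegree ≤ n)
    (hk : k < n) {w : ℝ} (h₀ : (derivative^[k] R).eval w = 0)
    (h₁ : (derivative^[k + 1] R).eval w = 0) : (rootsBelow R w).card + 2 ≤ n := by
  rw [Function.iterate_succ_apply'] at h₁
  by_cases hd : derivative (derivative^[k] R) = 0
  · have hRk : derivative^[k] R = 0 := by
      rw [eq_C_of_derivative_eq_zero hd, eval_C] at h₀
      rw [eq_C_of_derivative_eq_zero hd, h₀, C_0]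
    have hdeg := natDegree_lt_of_iterate_derivative_eq_zero hR hRk
    have := card_rootsBelow_le_natDegree R w
    omega
  · have hRk : derivative^[k] R ≠ 0 := ne_of_apply_ne derivative (by rwa [derivative_zero])
    have hbelow := card_rootsBelow_le_iterate_derivative R w k hRk
    have hstep := card_rootsBelow_le_card_rootsBelow_derivative hd h₀
    have htop := card_rootsBelow_lt_natDegree hd h₁
    have hdeg := natDegree_derivative_le (derivative^[k] R)
    have hdeg' := natDegree_iterate_derivative R k
    omega

lemma exists_eval_eq_zero_of_mul_neg (R : ℝ[X]) {x y : ℝ} (hxy : x < y)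
    (h : R.eval x * R.eval y < 0) : ∃ z ∈ Ioo x y, R.eval z = 0 := by
  rcases mul_neg_iff.1 h with ⟨hx, hy⟩ | ⟨hx, hy⟩
  · exact intermediate_value_Ioo' hxy.le R.continuousOn ⟨hy, hx⟩
  · exact intermediate_value_Ioo hxy.le R.continuousOn ⟨hx, hy⟩

lemma le_card_rootsBelow_add_one {R : ℝ[X]} (hR : R ≠ 0) {n : ℕ} {s : ℕ → ℝ}
    (hs : StrictAntiOn s (Icc 1 n))
    (hsign : ∀ i ∈ Ico 1 n, R.eval (s i) * R.eval (s (i + 1)) < 0) :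
    n ≤ (rootsBelow R (s 1)).card + 1 := by
  have hcard : ((Finset.Icc 1 n).image s).card = n := by
    rw [Finset.card_image_of_injOn (by simpa using hs.injOn), Nat.card_Icc, Nat.add_sub_cancel]
  rw [← hcard]
  refine Finset.card_le_of_interleaved ?_
  simp only [Finset.forall_mem_image, Finset.mem_Icc]
  intro j hj i hi hji hgap
  have hij : i < j := (hs.lt_iff_gt hj hi).1 hji
  have hi' : i + 1 ∈ Icc 1 n := ⟨by omega, by omega⟩
  have hj_eq : j = i + 1 := by
    by_contra hne
    exact hgap hi' ⟨hs hi' hj (by omega), hs hi hi' (by omega)⟩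
  subst hj_eq
  obtain ⟨z, ⟨hjz, hzi⟩, hz⟩ := exists_eval_eq_zero_of_mul_neg R hji
    (by rw [mul_comm]; exact hsign i ⟨hi.1, hij.trans_le hj.2⟩)
  have hi_le : s i ≤ s 1 := hs.antitoneOn ⟨le_rfl, by omega⟩ hi hi.1
  exact ⟨z, (mem_rootsBelow hR).2 ⟨hz, hzi.trans_le hi_le⟩, hjz, hzi⟩

lemma sub_mul_mul_self_pos {ρ x y : ℝ} (hρ : |ρ| < 1) (hx : x ≠ 0) (hyx : |y| ≤ |x|) :
    0 < (x - ρ * y) * x := by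
  have hsmall : |ρ * y| < |x| := by
    rw [abs_mul]
    nlinarith [abs_nonneg ρ, abs_pos.2 hx]
  have hprod : ρ * y * x < x * x := by
    refine (le_abs_self _).trans_lt ?_
    rw [abs_mul, ← abs_mul_abs_self x]
    exact mul_lt_mul_of_pos_right hsmall (abs_pos.2 hx)
  rw [sub_mul]
  exact sub_pos.2 hprod

/-- If `|p⁽ᵏ⁾| > |P⁽ᵏ⁾|` at the rightmost node, then `R = P - ρ p` with `|ρ| < 1` and
`R⁽ᵏ⁾ = R⁽ᵏ⁺¹⁾ = 0` there inherits the sign changes of `P`, hence has too many zeros. -/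
theorem abs_iterate_derivative_le_of_alternation {P p : ℝ[X]} {n k : ℕ} (hP : P.natDegree ≤ n)
    (hp : p.natDegree ≤ n) (hn : 2 ≤ n) (hk : k < n) {s : ℕ → ℝ} (hs : StrictAntiOn s (Icc 1 n))
    (hsign : ∀ i ∈ Ico 1 n, P.eval (s i) * P.eval (s (i + 1)) < 0)
    (hle : ∀ i ∈ Icc 1 n, |p.eval (s i)| ≤ |P.eval (s i)|)
    (hPk : (derivative^[k + 1] P).eval (s 1) = 0) (hpk : (derivative^[k + 1] p).eval (s 1) = 0) :
    |(derivative^[k] p).eval (s 1)| ≤ |(derivative^[k] P).eval (s 1)| := by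
  by_contra! hlt
  obtain ⟨ρ, hρ, hRk⟩ : ∃ ρ : ℝ, |ρ| < 1 ∧
      (derivative^[k] P).eval (s 1) = ρ * (derivative^[k] p).eval (s 1) := by
    have hpos := (abs_nonneg _).trans_lt hlt
    exact ⟨_, by rwa [abs_div, div_lt_one hpos], (div_mul_cancel₀ _ (abs_pos.1 hpos)).symm⟩
  set R : ℝ[X] := P - C ρ * p with hR
  have hderiv (j : ℕ) : (derivative^[j] R).eval (s 1) =
      (derivative^[j] P).eval (s 1) - ρ * (derivative^[j] p).eval (s 1) := by
    rw [hR, iterate_derivative_sub, iterate_derivative_C_mul, eval_sub, eval_mul, eval_C]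
  have hdeg : R.natDegree ≤ n :=
    (natDegree_sub_le _ _).trans (max_le hP ((natDegree_C_mul_le _ _).trans hp))
  have hsame {i : ℕ} (hi : i ∈ Icc 1 n) (hPi : P.eval (s i) ≠ 0) :
      0 < R.eval (s i) * P.eval (s i) := by
    rw [hR, eval_sub, eval_mul, eval_C]
    exact sub_mul_mul_self_pos hρ hPi (hle i hi)
  have hRsign : ∀ i ∈ Ico 1 n, R.eval (s i) * R.eval (s (i + 1)) < 0 := by
    intro i hi
    have hPi := hsign i hi
    have h₁ := hsame ⟨hi.1, hi.2.le⟩ (left_ne_zero_of_mul hPi.ne)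
    have h₂ := hsame (i := i + 1) ⟨by omega, hi.2⟩ (right_ne_zero_of_mul hPi.ne)
    nlinarith [mul_pos h₁ h₂]
  have hR0 : R ≠ 0 := by
    intro h0
    simpa [h0] using hRsign 1 ⟨le_rfl, hn⟩
  have hmany := le_card_rootsBelow_add_one hR0 hs hRsign
  have hfew := card_rootsBelow_add_two_le hR0 hdeg hk
    (by rw [hderiv, hRk, sub_self]) (by rw [hderiv, hPk, hpk, mul_zero, sub_zero])
  omega

lemma iterate_derivative_comp_linear {A : Type*} [CommSemiring A] (p : A[X]) (a c : A) (k : ℕ) :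
    derivative^[k] (p.comp (C a * X + C c)) =
      C (a ^ k) * (derivative^[k] p).comp (C a * X + C c) := by
  induction k with
  | zero => simp
  | succ k ih =>
    rw [Function.iterate_succ_apply', Function.iterate_succ_apply', ih, derivative_C_mul,
      derivative_comp]
    simp only [derivative_add, derivative_C_mul, derivative_X, derivative_C, mul_one, add_zero,
      ← mul_assoc, ← C_mul, pow_succ]

lemma chebDeriv_one_one (n : ℤ) : chebDeriv n 1 1 = n ^ 2 :=
  Chebyshev.derivative_T_eval_one n

lemma chebDeriv_two_one (n : ℤ) : chebDeriv n 2 1 = n ^ 2 * (n ^ 2 - 1) / 3 := by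
  have hrec := Chebyshev.iterate_derivative_T_eval_one_recurrence (R := ℝ) n 1
  change _ * chebDeriv n 2 1 = _ * chebDeriv n 1 1 at hrec
  rw [chebDeriv_one_one] at hrec
  push_cast at hrec
  linarith

lemma chebDeriv_two_one_nonneg {n : ℤ} (hn : n ≠ 0) : 0 ≤ chebDeriv n 2 1 := by
  have hsq : (1 : ℝ) ≤ n ^ 2 := by
    exact_mod_cast (one_le_sq_iff_one_le_abs n).2 (Int.one_le_abs hn)
  have := sub_nonneg.2 hsq
  rw [chebDeriv_two_one]
  positivity

lemma one_sub_sq_mul_chebDeriv_add_two (n : ℤ) (k : ℕ) (x : ℝ) :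
    (1 - x ^ 2) * chebDeriv n (k + 2) x =
      (2 * k + 1) * x * chebDeriv n (k + 1) x - (n ^ 2 - k ^ 2) * chebDeriv n k x :=
  Chebyshev.one_sub_X_sq_mul_iterate_derivative_T_eval n k x

section CriticalPoint

variable {n : ℤ} {x : ℝ} (hx : 1 - x ^ 2 ≠ 0) (hcrit : chebDeriv n 1 x = 0)
include hx hcrit

lemma chebDeriv_two_of_critical : chebDeriv n 2 x = -(n ^ 2 * chebDeriv n 0 x) / (1 - x ^ 2) := by
  have hode := one_sub_sq_mul_chebDeriv_add_two n 0 x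
  rw [zero_add, zero_add, hcrit] at hode
  rw [eq_div_iff hx, mul_comm, hode]
  push_cast
  ring

lemma chebDeriv_three_of_critical :
    chebDeriv n 3 x = 3 * x * chebDeriv n 2 x / (1 - x ^ 2) := by
  have hode := one_sub_sq_mul_chebDeriv_add_two n 1 x
  norm_num [hcrit] at hode
  rw [eq_div_iff hx, mul_comm, hode]

lemma chebDeriv_four_of_critical : chebDeriv n 4 x =
    (15 * x ^ 2 - (n ^ 2 - 4) * (1 - x ^ 2)) * chebDeriv n 2 x / (1 - x ^ 2) ^ 2 := by
  have hode := one_sub_sq_mul_chebDeriv_add_two n 2 x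
  norm_num [chebDeriv_three_of_critical hx hcrit] at hode
  rw [eq_div_iff (pow_ne_zero 2 hx), pow_two (1 - x ^ 2), ← mul_assoc, mul_comm (chebDeriv n 4 x),
    hode]
  field

end CriticalPoint

lemma chebDeriv_one_node {n i : ℕ} (hi₀ : 0 < i) (hi : i < n) :
    chebDeriv n 1 (Chebyshev.node n i) = 0 := by
  have hextr := (Chebyshev.isLocalExtr_T_real (by omega) hi₀ hi).deriv_eq_zero
  rwa [Polynomial.deriv] at hextr

lemma node_one_lt_one {n : ℕ} (hn : 1 ≤ n) : Chebyshev.node n 1 < 1 := by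
  simpa only [Chebyshev.node_eq_one] using Chebyshev.node_lt hn zero_lt_one

lemma neg_one_lt_node_one {n : ℕ} (hn : 2 ≤ n) : -1 < Chebyshev.node n 1 := by
  rw [← Chebyshev.node_eq_neg_one (n := n) (by omega)]
  exact Chebyshev.node_lt le_rfl hn

lemma one_sub_node_one_sq_pos {n : ℕ} (hn : 2 ≤ n) : 0 < 1 - Chebyshev.node n 1 ^ 2 := by
  nlinarith [node_one_lt_one (n := n) (by omega), neg_one_lt_node_one hn]

lemma strictAntiOn_node_Icc (n : ℕ) : StrictAntiOn (Chebyshev.node n) (Icc 1 n) :=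
  fun _ _ _ hj hij => Chebyshev.node_lt hj.2 hij

/-- The polynomial `T_n + b (1 + X) T_n'`. Like `T_n` it takes the value `(-1) ^ i` at the nodes
`cos (i π / n)`, `1 ≤ i ≤ n`, while `b` is free to make one of its derivatives vanish at
`cos (π / n)`. -/
noncomputable def tiltedT (n : ℕ) (b : ℝ) : ℝ[X] :=
  Chebyshev.T ℝ n + C b * (derivative (Chebyshev.T ℝ n) * X + derivative (Chebyshev.T ℝ n))

lemma natDegree_tiltedT_le (n : ℕ) (b : ℝ) : (tiltedT n b).natDegree ≤ n := by
  obtain rfl | hn := n.eq_zero_or_pos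
  · simp [tiltedT]
  have hT : (Chebyshev.T ℝ n).natDegree = n := by simp [Chebyshev.natDegree_T]
  have hT' : (derivative (Chebyshev.T ℝ n)).natDegree + 1 ≤ n := by
    have := natDegree_derivative_le (Chebyshev.T ℝ n)
    omega
  refine natDegree_add_le_of_degree_le hT.le ((natDegree_C_mul_le _ _).trans ?_)
  refine natDegree_add_le_of_degree_le (natDegree_mul_le.trans ?_) (by omega)
  rwa [natDegree_X]

lemma eval_iterate_derivative_tiltedT (n : ℕ) (b : ℝ) (k : ℕ) (x : ℝ) :
    (derivative^[k] (tiltedT n b)).eval x =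
      chebDeriv n k x + b * (k * chebDeriv n k x + (1 + x) * chebDeriv n (k + 1) x) := by
  rw [tiltedT, iterate_map_add, iterate_derivative_C_mul, iterate_map_add,
    iterate_derivative_derivative_mul_X, ← Function.iterate_succ_apply]
  simp only [eval_add, eval_mul, eval_C, eval_X, nsmul_eq_mul, eval_natCast, chebDeriv]
  ring

lemma eval_tiltedT_node {n i : ℕ} (hi : i ∈ Icc 1 n) (b : ℝ) :
    (tiltedT n b).eval (Chebyshev.node n i) = (-1) ^ i := by
  have hvanish : (1 + Chebyshev.node n i) * chebDeriv n 1 (Chebyshev.node n i) = 0 := by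
    rcases hi.2.lt_or_eq with hin | rfl
    · rw [chebDeriv_one_node hi.1 hin, mul_zero]
    · rw [Chebyshev.node_eq_neg_one (Nat.one_le_iff_ne_zero.1 hi.1), add_neg_cancel, zero_mul]
  have heval := eval_iterate_derivative_tiltedT n b 0 (Chebyshev.node n i)
  rw [zero_add, hvanish, Nat.cast_zero, zero_mul, zero_add, mul_zero, add_zero] at heval
  exact heval.trans (Chebyshev.eval_T_real_node (Finset.mem_Iic.2 hi.2))

/-- The denominator `D` of the parameter `b = -3 x (1 - x) / D` for which the third derivative of
`tiltedT n b` vanishes at a critical point `x` of `T_n`, as a function of `g = (n² - 1) (1 - x)` and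
`h = 1 - x`. -/
def tiltDenominator (g h : ℝ) : ℝ := 15 - 15 * h + 3 * h ^ 2 - g * (2 - h)

lemma eval_derivative_one_tiltedT_of_critical {n : ℕ} {x : ℝ} (hcrit : chebDeriv n 1 x = 0)
    (b : ℝ) : (derivative^[1] (tiltedT n b)).eval x = b * (1 + x) * chebDeriv n 2 x := by
  rw [eval_iterate_derivative_tiltedT, hcrit]
  ring

section CriticalPoint

variable {n : ℕ} {x : ℝ} (hx : 1 - x ^ 2 ≠ 0) (hcrit : chebDeriv n 1 x = 0) (b : ℝ)
include hx hcrit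

lemma eval_derivative_two_tiltedT_of_critical :
    (derivative^[2] (tiltedT n b)).eval x =
      (1 - x + b * (2 + x)) / (1 - x) * chebDeriv n 2 x := by
  have hfactor : 1 - x ^ 2 = (1 - x) * (1 + x) := by ring
  obtain ⟨h₁, h₂⟩ := mul_ne_zero_iff.1 (hfactor ▸ hx)
  rw [eval_iterate_derivative_tiltedT, chebDeriv_three_of_critical hx hcrit, hfactor]
  field

variable {g h : ℝ} (hh : h = 1 - x) (hg : g = (n ^ 2 - 1) * h)
include hh hg

lemma eval_derivative_three_tiltedT_of_critical :
    (derivative^[3] (tiltedT n b)).eval x =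
      (3 * x * h + b * tiltDenominator g h) / (h * (1 - x ^ 2)) * chebDeriv n 2 x := by
  have hfactor : 1 - x ^ 2 = (1 - x) * (1 + x) := by ring
  obtain ⟨h₁, h₂⟩ := mul_ne_zero_iff.1 (hfactor ▸ hx)
  rw [eval_iterate_derivative_tiltedT, chebDeriv_three_of_critical hx hcrit,
    chebDeriv_four_of_critical hx hcrit, hfactor, tiltDenominator, hg, hh]
  push_cast
  field

variable (hD : tiltDenominator g h ≠ 0)
include hD

lemma eval_derivative_three_tiltedT_eq_zero :
    (derivative^[3] (tiltedT n (-(3 * x * h) / tiltDenominator g h))).eval x = 0 := by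
  rw [eval_derivative_three_tiltedT_of_critical hx hcrit _ hh hg, div_mul_cancel₀ _ hD,
    add_neg_cancel, zero_div, zero_mul]

lemma eval_derivative_two_tiltedT_eq :
    (derivative^[2] (tiltedT n (-(3 * x * h) / tiltDenominator g h))).eval x =
      -((1 + x) * (g - 3) / tiltDenominator g h * chebDeriv n 2 x) := by
  have h₁ : 1 - x ≠ 0 := left_ne_zero_of_mul (b := 1 + x) (by convert! hx using 1; ring)
  have hnum : tiltDenominator g h = 3 * x * (2 + x) - (1 + x) * (g - 3) := by
    rw [tiltDenominator, hg, hh]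
    ring
  have hcoeff : (1 - x + -(3 * x * h) / tiltDenominator g h * (2 + x)) / (1 - x) =
      -((1 + x) * (g - 3) / tiltDenominator g h) := by
    rw [hh] at hD hnum ⊢
    field_simp
    linear_combination hnum
  rw [eval_derivative_two_tiltedT_of_critical hx hcrit, hcoeff, neg_mul]

end CriticalPoint

lemma chebDeriv_two_node_one {n : ℕ} (hn : 2 ≤ n) :
    chebDeriv n 2 (Chebyshev.node n 1) = n ^ 2 / (1 - Chebyshev.node n 1 ^ 2) := by
  have hT : chebDeriv n 0 (Chebyshev.node n 1) = -1 :=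
    (Chebyshev.eval_T_real_node (Finset.mem_Iic.2 (by omega))).trans (pow_one _)
  rw [chebDeriv_two_of_critical (one_sub_node_one_sq_pos hn).ne'
    (chebDeriv_one_node zero_lt_one hn), hT]
  simp only [Int.cast_natCast, mul_neg_one, neg_neg]

/-- The image of the Chebyshev node `cos (i π / n)` under the affine map that fixes `-1` and moves
`cos (π / n)` to `1`. The points with `1 ≤ i ≤ n` are the only ones at which the size of the
polynomial matters. -/
noncomputable def stretchedNode (n i : ℕ) : ℝ :=
  2 * (1 + Chebyshev.node n i) / (1 + Chebyshev.node n 1) - 1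

lemma stretchedNode_mem_Icc {n i : ℕ} (hi : i ∈ Icc 1 n) :
    stretchedNode n i ∈ Icc (-1 : ℝ) 1 := by
  have hle : Chebyshev.node n i ≤ Chebyshev.node n 1 :=
    (strictAntiOn_node_Icc n).antitoneOn ⟨le_rfl, hi.1.trans hi.2⟩ hi hi.1
  have hi₀ : -1 ≤ Chebyshev.node n i := Chebyshev.node_mem_Icc.1
  have hratio : (1 + Chebyshev.node n i) / (1 + Chebyshev.node n 1) ∈ Icc (0 : ℝ) 1 :=
    ⟨div_nonneg (by linarith) (by linarith), div_le_one_of_le₀ (by linarith) (by linarith)⟩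
  rw [stretchedNode, mul_div_assoc]
  constructor <;> linarith [hratio.1, hratio.2]

lemma abs_iterate_derivative_eval_one_le {n k : ℕ} (hn : 2 ≤ n) (hk : k < n) {p : ℝ[X]}
    (hp : p.natDegree ≤ n) (hnodes : ∀ i ∈ Icc 1 n, |p.eval (stretchedNode n i)| ≤ 1)
    (hpk : (derivative^[k + 1] p).eval 1 = 0) {b : ℝ}
    (hb : (derivative^[k + 1] (tiltedT n b)).eval (Chebyshev.node n 1) = 0) :
    |(derivative^[k] p).eval 1| ≤ ((1 + Chebyshev.node n 1) / 2) ^ k *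
      |(derivative^[k] (tiltedT n b)).eval (Chebyshev.node n 1)| := by
  have hw := neg_one_lt_node_one hn
  set w := Chebyshev.node n 1 with hw_def
  have hw₀ : 0 < 1 + w := by linarith
  set a := 2 / (1 + w) with ha_def
  have ha : 0 < a := by positivity
  have hline (x : ℝ) : (C a * X + C (a - 1)).eval x = 2 * (1 + x) / (1 + w) - 1 := by
    simp only [eval_add, eval_mul, eval_C, eval_X, ha_def]
    ring
  have hline_w : (C a * X + C (a - 1)).eval w = 1 := by
    rw [hline, mul_div_cancel_right₀ _ hw₀.ne']
    norm_num
  have hderiv (j : ℕ) : (derivative^[j] (p.comp (C a * X + C (a - 1)))).eval w =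
      a ^ j * (derivative^[j] p).eval 1 := by
    rw [iterate_derivative_comp_linear, eval_mul, eval_C, eval_comp, hline_w]
  have hcompare : |(derivative^[k] (p.comp (C a * X + C (a - 1)))).eval w| ≤
      |(derivative^[k] (tiltedT n b)).eval w| := by
    refine abs_iterate_derivative_le_of_alternation (natDegree_tiltedT_le n b) ?_ hn hk
      (strictAntiOn_node_Icc n) (fun i hi => ?_) (fun i hi => ?_) hb ?_
    · rw [natDegree_comp, natDegree_linear ha.ne', mul_one]
      exact hp
    · rw [eval_tiltedT_node ⟨hi.1, hi.2.le⟩, eval_tiltedT_node ⟨by omega, hi.2⟩, ← pow_add]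
      exact (Odd.neg_one_pow ⟨i, by omega⟩).trans_lt neg_one_lt_zero
    · rw [eval_comp, hline, eval_tiltedT_node hi, abs_neg_one_pow]
      exact hnodes i hi
    · rw [← hw_def, hderiv, hpk, mul_zero]
  rw [hderiv, abs_mul, abs_of_pos (pow_pos ha k)] at hcompare
  calc |(derivative^[k] p).eval 1|
      = ((1 + w) / 2) ^ k * (a ^ k * |(derivative^[k] p).eval 1|) := by
        rw [← mul_assoc, ← mul_pow, ha_def, div_mul_div_cancel₀ two_ne_zero, div_self hw₀.ne',
          one_pow, one_mul]
    _ ≤ _ := by gcongr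

lemma three_div_pi_mul_le_sin {x : ℝ} (hx₀ : 0 ≤ x) (hx : x ≤ Real.pi / 6) :
    3 / Real.pi * x ≤ Real.sin x := by
  have hpi := Real.pi_pos
  have hzero : (0 : ℝ) ∈ Icc 0 Real.pi := ⟨le_rfl, hpi.le⟩
  have hsixth : Real.pi / 6 ∈ Icc 0 Real.pi := ⟨by positivity, by linarith⟩
  have hweight : 6 * x / Real.pi ≤ 1 := (div_le_one hpi).2 (by linarith)
  have hchord := strictConcaveOn_sin_Icc.concaveOn.2 hzero hsixth (sub_nonneg.2 hweight)
    (by positivity) (sub_add_cancel _ _)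
  simp only [smul_eq_mul, Real.sin_zero, mul_zero, Real.sin_pi_div_six, zero_add] at hchord
  convert! hchord using 1
  · ring
  · congr 1; field_simp

lemma one_sub_cos_eq_two_mul_sin_half_sq (x : ℝ) : 1 - Real.cos x = 2 * Real.sin (x / 2) ^ 2 := by
  rw [Real.sin_sq_eq_half_sub, mul_div_cancel₀ x two_ne_zero]
  ring

lemma mul_sq_le_one_sub_cos {x : ℝ} (hx₀ : 0 ≤ x) (hx : x ≤ Real.pi / 3) :
    9 / (2 * Real.pi ^ 2) * x ^ 2 ≤ 1 - Real.cos x := by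
  have hsin := three_div_pi_mul_le_sin (x := x / 2) (by positivity) (by linarith)
  calc 9 / (2 * Real.pi ^ 2) * x ^ 2 = 2 * (3 / Real.pi * (x / 2)) ^ 2 := by field
    _ ≤ 2 * Real.sin (x / 2) ^ 2 := by gcongr
    _ = 1 - Real.cos x := (one_sub_cos_eq_two_mul_sin_half_sq x).symm

lemma cos_sq_mul_one_add_sq_le_one {x : ℝ} (hx : |x| ≤ Real.pi / 2) :
    Real.cos x ^ 2 * (1 + x ^ 2) ≤ 1 := by
  obtain ⟨hx₁, hx₂⟩ := abs_le.1 hx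
  have hcos₀ := Real.cos_nonneg_of_neg_pi_div_two_le_of_le hx₁ hx₂
  have hcos := Real.cos_le_one_div_sqrt_sq_add_one (x := x) (by linarith) (by linarith)
  have hsq := pow_le_pow_left₀ hcos₀ hcos 2
  rwa [div_pow, Real.sq_sqrt (by positivity), one_pow, le_div_iff₀ (by positivity),
    add_comm] at hsq

lemma one_sub_cos_mul_le {x : ℝ} (hx : |x| ≤ 2 * Real.pi) :
    (1 - Real.cos x) * (1 + x ^ 2 / 16) ≤ x ^ 2 / 2 := by
  have hquarter : |x / 4| ≤ Real.pi / 2 := by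
    rw [abs_div, Nat.abs_ofNat]
    linarith
  have hcos := cos_sq_mul_one_add_sq_le_one hquarter
  have hdouble : Real.sin (x / 2) = 2 * Real.sin (x / 4) * Real.cos (x / 4) := by
    rw [← Real.sin_two_mul]; ring_nf
  calc (1 - Real.cos x) * (1 + x ^ 2 / 16)
      = 8 * Real.sin (x / 4) ^ 2 * (Real.cos (x / 4) ^ 2 * (1 + (x / 4) ^ 2)) := by
        rw [one_sub_cos_eq_two_mul_sin_half_sq, hdouble]; ring
    _ ≤ 8 * (x / 4) ^ 2 * 1 := by gcongr ?_ * ?_; gcongr 8 * ?_; exact Real.sin_sq_le_sq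
    _ = x ^ 2 / 2 := by ring

lemma tiltDenominator_pos {g h : ℝ} (h₁ : h ≤ 1 / 2) (hg : g + 1.6 * h ≤ 4.935) :
    0 < tiltDenominator g h := by
  rw [tiltDenominator]
  nlinarith

lemma tilt_cost_le_gain {g h G : ℝ} (h₀ : 0 ≤ h) (h₁ : h ≤ 1 / 2) (hg : 4 ≤ g)
    (hgG : g + 1.6 * h ≤ G) (hG : G ≤ 4.935) :
    (G - 3) * g * (4 * g - 2 * g * h + 3 * h) ≤
      1.6 * (2 - h) ^ 2 * (27 + 2 * (g - 3) * (G - 3)) := by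
  have hmono : 0 ≤ g * (4 * g - 2 * g * h + 3 * h) - 3.2 * (2 - h) ^ 2 * (g - 3) := by
    nlinarith [mul_nonneg h₀ (sub_nonneg.2 hg), mul_nonneg h₀ (sub_nonneg.2 h₁)]
  have hend : 1.935 * g * (4 * g - 2 * g * h + 3 * h) ≤
      1.6 * (2 - h) ^ 2 * (27 + 2 * (g - 3) * 1.935) := by
    obtain ⟨u, hu, rfl⟩ : ∃ u, 0 ≤ u ∧ g = 4.935 - 1.6 * h - u :=
      ⟨4.935 - 1.6 * h - g, by linarith, by ring⟩
    nlinarith [mul_nonneg h₀ hu, mul_nonneg hu (sub_nonneg.2 hg), mul_nonneg h₀ (sub_nonneg.2 h₁)]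
  nlinarith [mul_nonneg hmono (sub_nonneg.2 hG)]

/-- After cross-multiplication, raising `g` to `G` gains a multiple of `G - g`, while lowering `h`
to `0` costs a multiple of `h`; the gain prevails because `1.6 * h ≤ G - g`. -/
lemma tilt_ratio_le {g h G : ℝ} (h₀ : 0 ≤ h) (h₁ : h ≤ 1 / 2) (hg : 4 ≤ g)
    (hgG : g + 1.6 * h ≤ G) (hG : G ≤ 4.935) :
    (2 - h) ^ 2 * (g - 3) / (4 * g * tiltDenominator g h) ≤
      (G - 3) / (G * (15 - 2 * G)) := by
  have hD := tiltDenominator_pos h₁ (hgG.trans hG)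
  have hcurv : 0 ≤ 27 + 2 * (g - 3) * (G - 3) := by nlinarith
  rw [div_le_div_iff₀ (by nlinarith) (by nlinarith), ← sub_nonneg]
  calc 0 ≤ ((G - g) - 1.6 * h) * ((2 - h) ^ 2 * (27 + 2 * (g - 3) * (G - 3))) +
        h * (1.6 * (2 - h) ^ 2 * (27 + 2 * (g - 3) * (G - 3)) -
          (G - 3) * g * (4 * g - 2 * g * h + 3 * h)) := by
        have hslope := sub_nonneg.2 (tilt_cost_le_gain h₀ h₁ hg hgG hG)
        have hgap : 0 ≤ (G - g) - 1.6 * h := by linarith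
        positivity
    _ = _ := by rw [tiltDenominator]; ring

lemma one_half_le_node_one {n : ℕ} (hn : 3 ≤ n) : 1 / 2 ≤ Chebyshev.node n 1 := by
  have hn' : (3 : ℝ) ≤ n := by exact_mod_cast hn
  have hpi := Real.pi_pos
  rw [Chebyshev.node, Nat.cast_one, one_mul, ← Real.cos_pi_div_three]
  exact Real.cos_le_cos_of_nonneg_of_le_pi (by positivity) (by linarith) (by gcongr)

lemma le_sq_mul_one_sub_node_one {n : ℕ} (hn : 3 ≤ n) :
    9 / 2 ≤ (n : ℝ) ^ 2 * (1 - Chebyshev.node n 1) := by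
  have hn' : (3 : ℝ) ≤ n := by exact_mod_cast hn
  have hcos := mul_sq_le_one_sub_cos (x := Real.pi / n) (by positivity) (by gcongr)
  rw [Chebyshev.node, Nat.cast_one, one_mul]
  calc (9 / 2 : ℝ) = n ^ 2 * (9 / (2 * Real.pi ^ 2) * (Real.pi / n) ^ 2) := by field
    _ ≤ _ := by gcongr

lemma add_mul_one_sub_node_one_le {n : ℕ} (hn : 1 ≤ n) :
    ((n : ℝ) ^ 2 + Real.pi ^ 2 / 16) * (1 - Chebyshev.node n 1) ≤ Real.pi ^ 2 / 2 := by
  have hn' : (1 : ℝ) ≤ n := by exact_mod_cast hn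
  have hpi := Real.pi_pos
  have hcos := one_sub_cos_mul_le (x := Real.pi / n) <| by
    rw [abs_of_pos (by positivity)]
    exact (div_le_self hpi.le hn').trans (by linarith)
  rw [Chebyshev.node, Nat.cast_one, one_mul]
  calc ((n : ℝ) ^ 2 + Real.pi ^ 2 / 16) * (1 - Real.cos (Real.pi / n))
      = n ^ 2 * ((1 - Real.cos (Real.pi / n)) * (1 + (Real.pi / n) ^ 2 / 16)) := by field
    _ ≤ n ^ 2 * ((Real.pi / n) ^ 2 / 2) := by gcongr
    _ = Real.pi ^ 2 / 2 := by field

lemma abs_derivative_one_eval_one_le {n : ℕ} (hn : 2 ≤ n) {p : ℝ[X]} (hp : p.natDegree ≤ n)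
    (hnodes : ∀ i ∈ Icc 1 n, |p.eval (stretchedNode n i)| ≤ 1)
    (hp₂ : (derivative^[2] p).eval 1 = 0) :
    |(derivative^[1] p).eval 1| ≤ 1 / 3 * chebDeriv n 1 1 := by
  have hw₁ := node_one_lt_one (n := n) (by omega)
  have hw₀ := neg_one_lt_node_one hn
  have hx := (one_sub_node_one_sq_pos hn).ne'
  have hcrit := chebDeriv_one_node zero_lt_one hn
  have hT₂ := chebDeriv_two_node_one hn
  set w := Chebyshev.node n 1
  set b := -(1 - w) / (2 + w) with hb
  have htilt : 1 - w + b * (2 + w) = 0 := by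
    rw [hb, div_mul_cancel₀ _ (by linarith), add_neg_cancel]
  have hbound := abs_iterate_derivative_eval_one_le hn hn hp hnodes hp₂ (b := b) <| by
    rw [eval_derivative_two_tiltedT_of_critical hx hcrit, htilt, zero_div, zero_mul]
  have hvalue : (derivative^[1] (tiltedT n b)).eval w = -(n ^ 2 / (2 + w)) := by
    rw [eval_derivative_one_tiltedT_of_critical hcrit, hT₂, hb]
    field
  have hw₂ : 0 < 2 + w := by linarith
  calc |(derivative^[1] p).eval 1| ≤ ((1 + w) / 2) ^ 1 * (n ^ 2 / (2 + w)) := by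
        rwa [hvalue, abs_neg, abs_of_nonneg (a := (n ^ 2 / (2 + w) : ℝ)) (by positivity)] at hbound
    _ = (1 + w) / (2 * (2 + w)) * n ^ 2 := by field
    _ ≤ 1 / 3 * n ^ 2 := by
        gcongr ?_ * _
        rw [div_le_div_iff₀ (by positivity) three_pos]
        linarith
    _ = 1 / 3 * chebDeriv n 1 1 := by rw [chebDeriv_one_one, Int.cast_natCast]

lemma abs_derivative_two_eval_one_le_of_tiltDenominator_pos {n : ℕ} (hn : 3 ≤ n) {p : ℝ[X]}
    (hp : p.natDegree ≤ n) (hnodes : ∀ i ∈ Icc 1 n, |p.eval (stretchedNode n i)| ≤ 1)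
    (hp₃ : (derivative^[3] p).eval 1 = 0) {g h : ℝ} (hh : h = 1 - Chebyshev.node n 1)
    (hg : g = (n ^ 2 - 1) * h) (hg₃ : 3 ≤ g) (hD : 0 < tiltDenominator g h) :
    |(derivative^[2] p).eval 1| ≤
      3 * chebDeriv n 2 1 * ((2 - h) ^ 2 * (g - 3) / (4 * g * tiltDenominator g h)) := by
  have hn₂ : 2 ≤ n := by omega
  have hx := (one_sub_node_one_sq_pos hn₂).ne'
  have hcrit := chebDeriv_one_node zero_lt_one hn₂
  have hbound := abs_iterate_derivative_eval_one_le hn₂ hn hp hnodes hp₃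
    (eval_derivative_three_tiltedT_eq_zero hx hcrit hh hg hD.ne')
  rw [eval_derivative_two_tiltedT_eq hx hcrit hh hg hD.ne', chebDeriv_two_node_one hn₂,
    abs_neg] at hbound
  have hh₀ : 0 < h := by linarith [node_one_lt_one (n := n) (by omega)]
  have hh₂ : 0 < 2 - h := by linarith [neg_one_lt_node_one hn₂]
  have hn₁ : (n : ℝ) ^ 2 - 1 ≠ 0 := left_ne_zero_of_mul (hg ▸ (three_pos.trans_le hg₃).ne')
  have hg_sub := sub_nonneg.2 hg₃
  have hsum : 1 + Chebyshev.node n 1 = 2 - h := by linarith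
  have hfactor : 1 - Chebyshev.node n 1 ^ 2 = h * (2 - h) := by rw [hh]; ring
  rw [hfactor, hsum, abs_of_nonneg (a := (2 - h) * (g - 3) / tiltDenominator g h *
    (n ^ 2 / (h * (2 - h)))) (by positivity)] at hbound
  calc |(derivative^[2] p).eval 1|
      ≤ ((2 - h) / 2) ^ 2 *
          ((2 - h) * (g - 3) / tiltDenominator g h * (n ^ 2 / (h * (2 - h)))) := hbound
    _ = n ^ 2 * (n ^ 2 - 1) * ((2 - h) ^ 2 * (g - 3) /
          (4 * ((n ^ 2 - 1) * h) * tiltDenominator g h)) := by field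
    _ = 3 * chebDeriv n 2 1 * ((2 - h) ^ 2 * (g - 3) / (4 * g * tiltDenominator g h)) := by
        rw [← hg, chebDeriv_two_one, Int.cast_natCast]
        ring

lemma abs_derivative_two_eval_one_le {n : ℕ} (hn : 3 ≤ n) {p : ℝ[X]} (hp : p.natDegree ≤ n)
    (hnodes : ∀ i ∈ Icc 1 n, |p.eval (stretchedNode n i)| ≤ 1)
    (hp₃ : (derivative^[3] p).eval 1 = 0) :
    |(derivative^[2] p).eval 1| ≤
      (3 / Real.pi ^ 2) * ((Real.pi ^ 2 - 6) / (15 - Real.pi ^ 2)) * chebDeriv n 2 1 := by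
  have hpi_lower : 9.6 ≤ Real.pi ^ 2 := by nlinarith [Real.pi_gt_d4]
  have hpi_upper : Real.pi ^ 2 ≤ 9.87 := by nlinarith [Real.pi_gt_d4, Real.pi_lt_d4]
  have hw₁ := node_one_lt_one (n := n) (by omega)
  have hw := one_half_le_node_one hn
  have hlower := le_sq_mul_one_sub_node_one hn
  have hupper := add_mul_one_sub_node_one_le (n := n) (by omega)
  obtain ⟨h, hh⟩ : ∃ h, h = 1 - Chebyshev.node n 1 := ⟨_, rfl⟩
  rw [← hh] at hlower hupper
  obtain ⟨g, hg⟩ : ∃ g, g = (n ^ 2 - 1) * h := ⟨_, rfl⟩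
  have hh₀ : 0 ≤ h := by linarith
  have hh₁ : h ≤ 1 / 2 := by linarith
  have hg₄ : 4 ≤ g := by linarith
  have hgG : g + 1.6 * h ≤ Real.pi ^ 2 / 2 :=
    calc g + 1.6 * h = (n ^ 2 + 0.6) * h := by rw [hg]; ring
      _ ≤ (n ^ 2 + Real.pi ^ 2 / 16) * h := by gcongr; linarith
      _ ≤ Real.pi ^ 2 / 2 := hupper
  have hG : Real.pi ^ 2 / 2 ≤ 4.935 := by linarith
  have hT₂ := chebDeriv_two_one_nonneg (n := n) (by omega)
  calc |(derivative^[2] p).eval 1|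
      ≤ 3 * chebDeriv n 2 1 * ((2 - h) ^ 2 * (g - 3) / (4 * g * tiltDenominator g h)) :=
        abs_derivative_two_eval_one_le_of_tiltDenominator_pos hn hp hnodes hp₃ hh hg
          (by linarith) (tiltDenominator_pos hh₁ (hgG.trans hG))
    _ ≤ 3 * chebDeriv n 2 1 *
          ((Real.pi ^ 2 / 2 - 3) / (Real.pi ^ 2 / 2 * (15 - 2 * (Real.pi ^ 2 / 2)))) :=
        mul_le_mul_of_nonneg_left (tilt_ratio_le hh₀ hh₁ hg₄ hgG hG) (by linarith)
    _ = _ := by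
        rw [mul_div_cancel₀ _ (two_ne_zero' ℝ), ← div_div]
        ring

lemma schur_constant_two_le :
    (3 / Real.pi ^ 2) * ((Real.pi ^ 2 - 6) / (15 - Real.pi ^ 2)) ≤ 0.23 := by
  have hpi_lower : 9.86 ≤ Real.pi ^ 2 := by nlinarith [Real.pi_gt_d4]
  have hpi_upper : Real.pi ^ 2 ≤ 9.8697 := by nlinarith [Real.pi_gt_d4, Real.pi_lt_d4]
  generalize Real.pi ^ 2 = t at hpi_lower hpi_upper ⊢
  rw [div_mul_div_comm, div_le_iff₀ (mul_pos (by linarith) (by linarith))]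
  nlinarith

theorem schur_inequality_k_one_two_general {n : ℕ} {p : ℝ[X]} (hp : p.natDegree ≤ n)
    (hnodes : ∀ i ∈ Icc 1 n, |p.eval (stretchedNode n i)| ≤ 1) :
    (2 ≤ n → (derivative^[2] p).eval 1 = 0 →
      |(derivative^[1] p).eval 1| ≤ (1 / 3) * chebDeriv n 1 1) ∧
    (3 ≤ n → (derivative^[3] p).eval 1 = 0 →
      |(derivative^[2] p).eval 1| ≤
        (3 / Real.pi ^ 2) * ((Real.pi ^ 2 - 6) / (15 - Real.pi ^ 2)) * chebDeriv n 2 1 ∧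
      |(derivative^[2] p).eval 1| ≤ 0.23 * chebDeriv n 2 1) := by
  refine ⟨fun hn hp₂ => abs_derivative_one_eval_one_le hn hp hnodes hp₂, fun hn hp₃ => ?_⟩
  have hbound := abs_derivative_two_eval_one_le hn hp hnodes hp₃
  have hT₂ := chebDeriv_two_one_nonneg (n := n) (by omega)
  exact ⟨hbound, hbound.trans (mul_le_mul_of_nonneg_right schur_constant_two_le hT₂)⟩

/-- the refined Schur-type bounds for `k = 1` and `k = 2`. -/
theorem schur_inequality_k_one_two (n : ℕ) (hn : 3 ≤ n) :
    (∀ p : Polynomial ℝ, p.natDegree ≤ n → (∀ x ∈ Icc (-1:ℝ) 1, |p.eval x| ≤ 1) →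
      (derivative^[2] p).eval 1 = 0 →
      |(derivative^[1] p).eval 1| ≤ (1 / 3) * chebDeriv n 1 1) ∧
    (∀ p : Polynomial ℝ, p.natDegree ≤ n → (∀ x ∈ Icc (-1:ℝ) 1, |p.eval x| ≤ 1) →
      (derivative^[3] p).eval 1 = 0 →
      |(derivative^[2] p).eval 1| ≤
        (3 / Real.pi ^ 2) * ((Real.pi ^ 2 - 6) / (15 - Real.pi ^ 2)) * chebDeriv n 2 1 ∧
      |(derivative^[2] p).eval 1| ≤ 0.23 * chebDeriv n 2 1) := by
  have hnodes {p : ℝ[X]} (hp : ∀ x ∈ Icc (-1 : ℝ) 1, |p.eval x| ≤ 1) :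
      ∀ i ∈ Icc 1 n, |p.eval (stretchedNode n i)| ≤ 1 :=
    fun i hi => hp _ (stretchedNode_mem_Icc hi)
  exact ⟨fun p hdeg hp => (schur_inequality_k_one_two_general hdeg (hnodes hp)).1 (by omega),
    fun p hdeg hp => (schur_inequality_k_one_two_general hdeg (hnodes hp)).2 hn⟩
end

section
/- Let n ≥ 3 and 1 ≤ k ≤ n-2, and let ω_k be the largest zero of T_n^{(k+1)}. Then for every x ∈ [0, ω_k], m_k(x, σ_n) ≤ (1/(1 − sin(π(k+1)/(2n))))^k · |T_n^{(k)}(ω_k)|. -/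
open Polynomial Set

/-!
Suppose first that `w` is a zero of `T_n^{(k+1)}` and that some admissible `f` had
`|f^{(k)}(w)| > |T_n^{(k)}(w)|`. Then there are `θ` with `|θ| < 1` and `μ` such that
`P = T_n - θ f + μ T_n'` satisfies `P^{(k)}(w) = P^{(k+1)}(w) = 0`. Since `T_n'` vanishes at the
interior Chebyshev nodes and has the sign of `T_n` at `1` and of `-T_n` at `-1`, dropping one of the
two endpoints leaves `n` nodes at which `P` alternates in sign. Rolle's theorem turns `N + 1`
alternating values of `P^{(i)}` into `N` alternating values of `P^{(i+1)}`, but no alternation is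
lost, even one is gained, in passing from `P^{(k)}` to `P^{(k+1)}` across the double zero `w`. So
`P^{(n)}` changes sign weakly, contradicting `P^{(n)} = σ_n - θ f^{(n)} > 0`.

For `x` in `[-ω_k, ω_k]`, let `a ≤ x ≤ b` be bounded by adjacent zeros of `T_n^{(k+1)}`. By Rolle,
any `k + 1` consecutive interior nodes enclose such a zero, whence `b - a ≤ 2 s` with
`s = sin (π (k + 1) / (2 n))`. A contraction of `[-1, 1]` into itself about one of its endpoints, of
ratio `l ≥ 1 - s`, then carries `a` or `b` to `x`. Composing `f` with it, the first case bounds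
`l^k |f^{(k)}(x)|` by a critical value of `T_n^{(k)}`, and Sonin's function shows that the outermost
critical value is the largest.
-/

section DerivativeSequences

/-- `g 0, g 1, …, g m` are successive derivatives of one another relative to `I`. Only the
derivatives up to order `m` are constrained, so `g 0` need not be smooth. -/
def IsDerivSeq (I : Set ℝ) (m : ℕ) (g : ℕ → ℝ → ℝ) : Prop :=
  ∀ i < m, ∀ x ∈ I, HasDerivWithinAt (g i) (g (i + 1) x) I x

theorem exists_hasDerivWithinAt_mul_sub_eq {I : Set ℝ} (hI : I.OrdConnected) {f f' : ℝ → ℝ}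
    (hf : ∀ x ∈ I, HasDerivWithinAt f (f' x) I x) {a b : ℝ} (ha : a ∈ I) (hb : b ∈ I)
    (hab : a < b) : ∃ ξ ∈ I, ξ ∈ Ioo a b ∧ f' ξ * (b - a) = f b - f a := by
  have hsub : Icc a b ⊆ I := hI.out ha hb
  obtain ⟨ξ, hξ, hslope⟩ := exists_hasDerivAt_eq_slope f f' hab
    (fun x hx => (hf x (hsub hx)).continuousWithinAt.mono hsub)
    (fun x hx => (hf x (hsub (Ioo_subset_Icc_self hx))).hasDerivAt
      (Filter.mem_of_superset (Icc_mem_nhds hx.1 hx.2) hsub))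
  refine ⟨ξ, hsub (Ioo_subset_Icc_self hξ), hξ, ?_⟩
  rw [hslope, div_mul_cancel₀ _ (sub_pos.2 hab).ne']

theorem IsDerivSeq.comp_affine {I J : Set ℝ} {m : ℕ} {g : ℕ → ℝ → ℝ} (hg : IsDerivSeq I m g)
    {l c : ℝ} (hmaps : MapsTo (fun x => l * x + c) J I) :
    IsDerivSeq J m fun i x => l ^ i * g i (l * x + c) := by
  intro i hi x hx
  have haffine : HasDerivWithinAt (fun x => l * x + c) l J x := by
    simpa using ((hasDerivWithinAt_id x J).const_mul l).add_const c
  refine (((hg i hi _ (hmaps hx)).comp x haffine hmaps).const_mul (l ^ i)).congr_deriv ?_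
  ring

end DerivativeSequences

section Alternation

/-- There are `N` points of `I`, running downwards from strictly below `b`, at which `s * f`,
`-s * f`, `s * f`, … lie in the cone `K`. The cone selects the kind of alternation: strict signs
for `ConvexCone.strictlyPositive`, weak signs for `ConvexCone.positive`, and plain zeros of `f`
(when `s ≠ 0`) for the zero cone. -/
inductive Alternates (I : Set ℝ) (K : ConvexCone ℝ ℝ) (f : ℝ → ℝ) : ℕ → ℝ → ℝ → Prop
  | zero (s b : ℝ) : Alternates I K f 0 s b
  | succ {N : ℕ} {s b z : ℝ} (hz : z ∈ I) (hzb : z < b) (hK : s * f z ∈ K)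
      (tail : Alternates I K f N (-s) z) : Alternates I K f (N + 1) s b

namespace Alternates

variable {I : Set ℝ} {K : ConvexCone ℝ ℝ} {f f' : ℝ → ℝ} {N : ℕ} {s b : ℝ}

theorem mono_bound {b' : ℝ} (h : Alternates I K f N s b) (hb : b ≤ b') :
    Alternates I K f N s b' := by
  cases h with
  | zero => exact zero s b'
  | succ hz hzb hK tail => exact succ hz (hzb.trans_le hb) hK tail

theorem mono_cone {K' : ConvexCone ℝ ℝ} (h : Alternates I K f N s b) (hK : K ≤ K') :
    Alternates I K' f N s b := by
  induction h with
  | zero s b => exact zero s b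
  | succ hz hzb hzK _ ih => exact succ hz hzb (hK hzK) ih

theorem of_strictAntiOn {w : ℕ → ℝ} (hanti : StrictAntiOn w (Iio N)) (hI : ∀ i < N, w i ∈ I)
    (hb : ∀ i < N, w i < b) (hK : ∀ i < N, s * (-1) ^ i * f (w i) ∈ K) :
    Alternates I K f N s b := by
  induction N generalizing w s b with
  | zero => exact zero s b
  | succ N ih =>
    refine succ (hI 0 N.succ_pos) (hb 0 N.succ_pos) (by simpa using hK 0 N.succ_pos)
      (ih (w := fun i => w (i + 1)) ?_ ?_ ?_ ?_)
    · exact fun i hi j hj hij => hanti (Nat.succ_lt_succ hi) (Nat.succ_lt_succ hj)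
        (Nat.succ_lt_succ hij)
    · exact fun i hi => hI (i + 1) (Nat.succ_lt_succ hi)
    · exact fun i hi => hanti N.succ_pos (Nat.succ_lt_succ hi) i.succ_pos
    · intro i hi
      convert hK (i + 1) (Nat.succ_lt_succ hi) using 1
      ring

theorem sign_ne_zero (h : Alternates I (ConvexCone.strictlyPositive ℝ ℝ) f (N + 1) s b) :
    s ≠ 0 := by
  rintro rfl
  obtain - | ⟨-, -, hpos, -⟩ := h
  simp at hpos

theorem exists_nonpos (h : Alternates I (ConvexCone.positive ℝ ℝ) f 2 s b) (hs : s ≠ 0) :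
    ∃ x ∈ I, f x ≤ 0 := by
  obtain - | @⟨_, _, _, y, hy, -, hfy, tail⟩ := h
  obtain - | @⟨_, _, _, z, hz, -, hfz, -⟩ := tail
  rw [ConvexCone.mem_positive] at hfy hfz
  rcases hs.lt_or_gt with hs | hs
  · exact ⟨y, hy, nonpos_of_mul_nonneg_right hfy hs⟩
  · exact ⟨z, hz, nonpos_of_mul_nonneg_right hfz (neg_neg_of_pos hs)⟩

section Rolle

variable (hI : I.OrdConnected) (hf : ∀ x ∈ I, HasDerivWithinAt f (f' x) I x)
include hI hf

theorem exists_deriv_mem {z : ℝ} (hz : z ∈ I) (hb : b ∈ I) (hzb : z < b)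
    (hfz : s * f z ∈ K) (hfb : -s * f b ∈ K) : ∃ ξ ∈ I, ξ ∈ Ioo z b ∧ -s * f' ξ ∈ K := by
  obtain ⟨ξ, hξI, hξ, hslope⟩ := exists_hasDerivWithinAt_mul_sub_eq hI hf hz hb hzb
  refine ⟨ξ, hξI, hξ, ?_⟩
  have hpos : 0 < b - z := sub_pos.2 hzb
  convert K.smul_mem (inv_pos.2 hpos) (K.add_mem hfb hfz) using 1
  rw [smul_eq_mul, eq_inv_mul_iff_mul_eq₀ hpos.ne']
  linear_combination -s * hslope

theorem deriv_of_mem (h : Alternates I K f N s b) (hb : b ∈ I) (hfb : -s * f b ∈ K) :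
    Alternates I K f' N (-s) b := by
  induction h with
  | zero s b => exact zero (-s) b
  | succ hz hzb hfz _ ih =>
    obtain ⟨ξ, hξI, hξ, hξK⟩ := exists_deriv_mem hI hf hz hb hzb hfz hfb
    exact succ hξI hξ.2 hξK ((ih hz (by rwa [neg_neg])).mono_bound hξ.1.le)

theorem deriv (h : Alternates I K f (N + 1) s b) : Alternates I K f' N s b := by
  obtain - | ⟨hz, hzb, hfz, tail⟩ := h
  simpa using (tail.deriv_of_mem hI hf hz (by rwa [neg_neg])).mono_bound hzb.le

end Rolle

theorem iterate_deriv {m : ℕ} {g : ℕ → ℝ → ℝ} (hI : I.OrdConnected) (hg : IsDerivSeq I m g)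
    {j d : ℕ} (hjd : j + d ≤ m) (h : Alternates I K (g j) (N + d) s b) :
    Alternates I K (g (j + d)) N s b := by
  induction d generalizing N with
  | zero => exact h
  | succ d ih =>
    have h' : Alternates I K (g (j + d)) (N + 1) s b := ih (by omega) (by convert h using 1; omega)
    exact h'.deriv hI (hg (j + d) (by omega))

section DoubleZero

variable {ω : ℝ} (hI : I.OrdConnected) (hf : ∀ x ∈ I, HasDerivWithinAt f (f' x) I x)
  (hω : ω ∈ I) (hfω : f ω = 0) (hf'ω : f' ω = 0)
include hI hf hω hfω hf'ω

theorem deriv_of_double_zero_at_bound (h : Alternates I (ConvexCone.strictlyPositive ℝ ℝ) f N s ω)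
    (hωb : ω < b) : Alternates I (ConvexCone.positive ℝ ℝ) f' (N + 1) s b :=
  succ hω hωb (by simp [hf'ω])
    ((h.mono_cone ConvexCone.strictlyPositive_le_positive).deriv_of_mem hI hf hω (by simp [hfω]))

theorem deriv_of_mem_of_double_zero_at_bound
    (h : Alternates I (ConvexCone.strictlyPositive ℝ ℝ) f N s ω)
    (hb : b ∈ I) (hfb : 0 < -s * f b) (hωb : ω < b) :
    Alternates I (ConvexCone.positive ℝ ℝ) f' (N + 2) (-s) b := by
  obtain ⟨ξ, hξI, hξ, hξK⟩ := exists_deriv_mem (K := ConvexCone.positive ℝ ℝ) hI hf hω hb hωb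
    (by simp [hfω]) hfb.le
  exact succ hξI hξ.2 hξK
    (by simpa using deriv_of_double_zero_at_bound hI hf hω hfω hf'ω h hξ.1)

theorem deriv_of_mem_of_double_zero (h : Alternates I (ConvexCone.strictlyPositive ℝ ℝ) f N s b)
    (hb : b ∈ I) (hfb : 0 < -s * f b) (hωb : ω < b) :
    Alternates I (ConvexCone.positive ℝ ℝ) f' (N + 2) (-s) b := by
  induction h with
  | zero s b =>
    exact deriv_of_mem_of_double_zero_at_bound hI hf hω hfω hf'ω (zero s ω) hb hfb hωb
  | @succ N s b z hz hzb hfz tail ih =>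
    rw [ConvexCone.mem_strictlyPositive] at hfz
    rcases lt_trichotomy z ω with hzω | rfl | hωz
    · exact deriv_of_mem_of_double_zero_at_bound hI hf hω hfω hf'ω (succ hz hzω hfz tail) hb hfb hωb
    · simp [hfω] at hfz
    · obtain ⟨ξ, hξI, hξ, hξK⟩ := exists_deriv_mem (K := ConvexCone.positive ℝ ℝ) hI hf hz hb hzb
        hfz.le hfb.le
      exact succ hξI hξ.2 hξK ((ih hz (by rwa [neg_neg]) hωz).mono_bound hξ.1.le)

theorem deriv_of_double_zero (h : Alternates I (ConvexCone.strictlyPositive ℝ ℝ) f N s b)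
    (hωb : ω < b) : Alternates I (ConvexCone.positive ℝ ℝ) f' (N + 1) s b := by
  obtain _ | @⟨_, _, _, z, hz, hzb, hfz, tail⟩ := h
  · exact deriv_of_double_zero_at_bound hI hf hω hfω hf'ω (zero s ω) hωb
  rw [ConvexCone.mem_strictlyPositive] at hfz
  rcases lt_trichotomy z ω with hzω | rfl | hωz
  · exact deriv_of_double_zero_at_bound hI hf hω hfω hf'ω (succ hz hzω hfz tail) hωb
  · simp [hfω] at hfz
  · simpa using (deriv_of_mem_of_double_zero hI hf hω hfω hf'ω tail hz (by rwa [neg_neg])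
      hωz).mono_bound hzb.le

end DoubleZero

theorem not_double_zero {n k : ℕ} {g : ℕ → ℝ → ℝ} {ω : ℝ} (hI : I.OrdConnected)
    (hg : IsDerivSeq I n g) (h : Alternates I (ConvexCone.strictlyPositive ℝ ℝ) (g 0) n s b)
    (htop : ∀ x ∈ I, 0 < g n x) (hk : k < n) (hω : ω ∈ I) (hωb : ω < b) :
    ¬ (g k ω = 0 ∧ g (k + 1) ω = 0) := by
  rintro ⟨hfω, hf'ω⟩
  obtain ⟨N, rfl⟩ : ∃ N, n = k + 1 + N := ⟨n - (k + 1), by omega⟩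
  have hs : s ≠ 0 := sign_ne_zero (N := k + N) (by convert h using 1; omega)
  have hstrict : Alternates I (ConvexCone.strictlyPositive ℝ ℝ) (g (0 + k)) (N + 1) s b :=
    iterate_deriv hI hg (by omega) (by convert h using 1; omega)
  rw [zero_add] at hstrict
  have hweak : Alternates I (ConvexCone.positive ℝ ℝ) (g (k + 1)) (2 + N) s b := by
    convert hstrict.deriv_of_double_zero hI (hg k hk) hω hfω hf'ω hωb using 1
    omega
  obtain ⟨x, hx, hgx⟩ := (iterate_deriv hI hg le_rfl hweak).exists_nonpos hs
  exact (htop x hx).not_ge hgx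

end Alternates

end Alternation

section ChebyshevDerivatives

open Polynomial.Chebyshev

theorem hasDerivAt_chebDeriv (m : ℤ) (i : ℕ) (x : ℝ) :
    HasDerivAt (chebDeriv m i) (chebDeriv m (i + 1) x) x := by
  rw [chebDeriv, Function.iterate_succ_apply']
  exact (derivative^[i] (T ℝ m)).hasDerivAt x

theorem isDerivSeq_chebDeriv (I : Set ℝ) (m : ℕ) (n : ℤ) : IsDerivSeq I m (chebDeriv n) :=
  fun i _ x _ => (hasDerivAt_chebDeriv n i x).hasDerivWithinAt

theorem continuous_chebDeriv (m : ℤ) (i : ℕ) : Continuous (chebDeriv m i) :=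
  (derivative^[i] (T ℝ m)).continuous

theorem sigmaN_pos (n : ℕ) : 0 < sigmaN n := by
  unfold sigmaN
  positivity

theorem chebDeriv_self (n : ℕ) (x : ℝ) : chebDeriv n n x = sigmaN n := by
  have hdeg : (T ℝ n).natDegree = n := by simp
  have hlead : (T ℝ n).coeff n = 2 ^ (n - 1) := by
    simpa [leadingCoeff, hdeg] using leadingCoeff_T ℝ n
  have hconst : (derivative^[n] (T ℝ n)).natDegree = 0 := by
    have := natDegree_iterate_derivative (T ℝ n) n
    omega
  rw [chebDeriv, eq_C_of_natDegree_eq_zero hconst, eval_C, coeff_iterate_derivative, zero_add,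
    hlead, Nat.descFactorial_self, nsmul_eq_mul, sigmaN, mul_comm]

theorem chebDeriv_succ_self (n : ℕ) (x : ℝ) : chebDeriv n (n + 1) x = 0 := by
  rw [chebDeriv, iterate_derivative_eq_zero (by simp), eval_zero]

theorem chebDeriv_neg (n i : ℕ) (x : ℝ) :
    chebDeriv n i (-x) = (-1) ^ (n + i) * chebDeriv n i x := by
  induction i generalizing x with
  | zero => simp [chebDeriv, T_eval_neg]
  | succ i ih =>
    have hreflect := (hasDerivAt_chebDeriv n i (-x)).comp x (hasDerivAt_neg x)
    rw [show chebDeriv n i ∘ Neg.neg = fun y => (-1) ^ (n + i) * chebDeriv n i y from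
      funext ih] at hreflect
    have := hreflect.unique ((hasDerivAt_chebDeriv n i x).const_mul _)
    linear_combination -this

theorem abs_chebDeriv_neg (n i : ℕ) (x : ℝ) : |chebDeriv n i (-x)| = |chebDeriv n i x| := by
  simp [chebDeriv_neg, abs_mul]

theorem chebDeriv_neg_eq_zero {n i : ℕ} {x : ℝ} : chebDeriv n i (-x) = 0 ↔ chebDeriv n i x = 0 := by
  simp [chebDeriv_neg]

theorem cast_sq_sub_cast_sq_pos {n k : ℕ} (hk : k < n) : (0 : ℝ) < (n : ℝ) ^ 2 - (k : ℝ) ^ 2 :=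
  sub_pos.2 (by gcongr)

theorem chebDeriv_one_pos_s16 {n i : ℕ} (hi : i ≤ n) : 0 < chebDeriv n i 1 := by
  induction i with
  | zero => simp [chebDeriv]
  | succ i ih =>
    have hrec : (2 * (i : ℝ) + 1) * chebDeriv n (i + 1) 1 =
        ((n : ℝ) ^ 2 - (i : ℝ) ^ 2) * chebDeriv n i 1 := by
      simpa [chebDeriv] using iterate_derivative_T_eval_one_recurrence (R := ℝ) n i
    refine pos_of_mul_pos_right (hrec ▸ ?_) (by positivity : (0 : ℝ) ≤ 2 * i + 1)
    exact mul_pos (cast_sq_sub_cast_sq_pos hi) (ih (by omega))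

theorem chebDeriv_pos_of_one_le {n i : ℕ} (hi : i ≤ n) {x : ℝ} (hx : 1 ≤ x) :
    0 < chebDeriv n i x := by
  induction hi using Nat.decreasingInduction generalizing x with
  | self => exact (chebDeriv_self n x).symm ▸ sigmaN_pos n
  | of_succ i hi ih =>
    have hmono : MonotoneOn (chebDeriv n i) (Ici 1) :=
      monotoneOn_of_hasDerivWithinAt_nonneg (convex_Ici 1)
        (fun y _ => (hasDerivAt_chebDeriv n i y).continuousAt.continuousWithinAt)
        (fun y _ => (hasDerivAt_chebDeriv n i y).hasDerivWithinAt)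
        fun y hy => (ih (interior_subset hy)).le
    exact (chebDeriv_one_pos_s16 hi.le).trans_le (hmono self_mem_Ici hx hx)

theorem mem_Ioo_of_chebDeriv_eq_zero {n i : ℕ} (hi : i ≤ n) {x : ℝ}
    (hx : chebDeriv n i x = 0) : x ∈ Ioo (-1) 1 := by
  constructor
  · by_contra! h
    exact (chebDeriv_pos_of_one_le hi (le_neg_of_le_neg h)).ne' (chebDeriv_neg_eq_zero.2 hx)
  · by_contra! h
    exact (chebDeriv_pos_of_one_le hi h).ne' hx

end ChebyshevDerivatives

section SoninFunction

/-- Sonin's function of the `k`-th derivative of `T_m`. It grows with `|x|`, and at the zeros of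
`T_m^{(k+1)}` it reduces to a multiple of `(T_m^{(k)})²`, so it compares the critical values. -/
noncomputable def sonin (m : ℤ) (k : ℕ) (x : ℝ) : ℝ :=
  ((m : ℝ) ^ 2 - (k : ℝ) ^ 2) * chebDeriv m k x ^ 2 + (1 - x ^ 2) * chebDeriv m (k + 1) x ^ 2

theorem hasDerivAt_sonin (m : ℤ) (k : ℕ) (x : ℝ) :
    HasDerivAt (sonin m k) (4 * k * x * chebDeriv m (k + 1) x ^ 2) x := by
  have ode : (1 - x ^ 2) * chebDeriv m (k + 2) x = (2 * k + 1) * x * chebDeriv m (k + 1) x -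
      ((m : ℝ) ^ 2 - (k : ℝ) ^ 2) * chebDeriv m k x :=
    Polynomial.Chebyshev.one_sub_X_sq_mul_iterate_derivative_T_eval (R := ℝ) m k x
  have hsum := (((hasDerivAt_chebDeriv m k x).fun_pow 2).const_mul
    ((m : ℝ) ^ 2 - (k : ℝ) ^ 2)).fun_add
    (((hasDerivAt_pow 2 x).const_sub 1).fun_mul ((hasDerivAt_chebDeriv m (k + 1) x).fun_pow 2))
  refine hsum.congr_deriv ?_
  simp only [Nat.add_one_sub_one, pow_one, Nat.cast_ofNat]
  linear_combination (2 * chebDeriv m (k + 1) x) * ode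

theorem monotoneOn_sonin (m : ℤ) (k : ℕ) : MonotoneOn (sonin m k) (Ici 0) := by
  refine monotoneOn_of_hasDerivWithinAt_nonneg (convex_Ici 0)
    (fun x _ => (hasDerivAt_sonin m k x).continuousAt.continuousWithinAt)
    (fun x _ => (hasDerivAt_sonin m k x).hasDerivWithinAt) fun x hx => ?_
  have hx : 0 ≤ x := interior_subset hx
  positivity

theorem abs_chebDeriv_le_of_abs_le {n k : ℕ} (hk : k < n) {a b : ℝ} (hab : |a| ≤ b)
    (ha : chebDeriv n (k + 1) a = 0) (hb : chebDeriv n (k + 1) b = 0) :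
    |chebDeriv n k a| ≤ |chebDeriv n k b| := by
  wlog hnonneg : 0 ≤ a generalizing a
  · simpa [abs_chebDeriv_neg] using this (a := -a) (by rwa [abs_neg])
      (chebDeriv_neg_eq_zero.2 ha) (by linarith)
  have hsonin := monotoneOn_sonin n k hnonneg ((abs_nonneg a).trans hab) ((le_abs_self a).trans hab)
  simp only [sonin, ha, hb, Int.cast_natCast] at hsonin
  exact sq_le_sq.1 (le_of_mul_le_mul_left (by linarith) (cast_sq_sub_cast_sq_pos hk))

end SoninFunction

section ZeroGaps

open Polynomial.Chebyshev

theorem chebDeriv_zero_node {n l : ℕ} (hl : l ≤ n) : chebDeriv n 0 (node n l) = (-1) ^ l := by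
  simpa [chebDeriv] using eval_T_real_node (Finset.mem_Iic.2 hl)

theorem chebDeriv_one_node_s16 {n l : ℕ} (hl₀ : 0 < l) (hl : l < n) :
    chebDeriv n 1 (node n l) = 0 :=
  (isLocalExtr_T_real (by omega) hl₀ hl).hasDerivAt_eq_zero (hasDerivAt_chebDeriv n 0 _)

theorem sin_pi_mul_div_two_mul_nonneg {m n : ℕ} (h : m ≤ n) :
    0 ≤ Real.sin (Real.pi * m / (2 * n)) := by
  have hmn : (m : ℝ) ≤ n := mod_cast h
  refine Real.sin_nonneg_of_nonneg_of_le_pi (by positivity)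
    (div_le_of_le_mul₀ (by positivity) Real.pi_pos.le ?_)
  gcongr
  linarith [n.cast_nonneg (α := ℝ)]

theorem sin_pi_mul_div_two_mul_lt_one {m n : ℕ} (h : m < n) :
    Real.sin (Real.pi * m / (2 * n)) < 1 := by
  have hlt : Real.pi * m / (2 * n) < Real.pi / 2 := by
    have hmn : (m : ℝ) < n := mod_cast h
    rw [div_lt_div_iff₀ (by linarith [m.cast_nonneg (α := ℝ)]) two_pos]
    nlinarith [Real.pi_pos]
  have hneg : -(Real.pi / 2) ≤ Real.pi * m / (2 * n) :=
    (neg_nonpos.2 (by positivity)).trans (by positivity)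
  simpa using Real.sin_lt_sin_of_lt_of_le_pi_div_two hneg le_rfl hlt

theorem node_sub_node_add_le {n i m : ℕ} (h : i + m ≤ n) :
    node n i - node n (i + m) ≤ 2 * Real.sin (Real.pi * m / (2 * n)) := by
  rcases n.eq_zero_or_pos with rfl | hn
  · simp [node]
  have hangle : ((i : ℝ) * Real.pi / n - (i + m : ℕ) * Real.pi / n) / 2 =
      -(Real.pi * m / (2 * n)) := by
    push_cast
    field
  rw [node, node, Real.cos_sub_cos, hangle, Real.sin_neg]
  nlinarith [sin_pi_mul_div_two_mul_nonneg (le_of_add_le_right h),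
    Real.sin_le_one ((i * Real.pi / n + (i + m : ℕ) * Real.pi / n) / 2)]

theorem node_strictAntiOn_Iic (n : ℕ) : StrictAntiOn (node n) (Iic n) :=
  fun _ _ _ hj hij => node_lt hj hij

theorem exists_chebDeriv_succ_eq_zero_between_nodes {n k i : ℕ} (hi : 0 < i) (hik : i + k < n) :
    ∃ z ∈ Icc (node n (i + k)) (node n i), chebDeriv n (k + 1) z = 0 := by
  have hanti := (node_strictAntiOn_Iic n).antitoneOn
  have hzeros : Alternates (Icc (node n (i + k)) (node n i)) 0 (chebDeriv n 1) (1 + k) 1 2 := by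
    refine .of_strictAntiOn (w := fun j => node n (i + j)) ?_ ?_ ?_ ?_
    · intro j _ l hl hjl
      rw [mem_Iio] at hl
      exact node_lt (by omega) (by omega)
    · exact fun j hj => ⟨hanti (by grind) (by grind) (by omega),
        hanti (by grind) (by grind) (by omega)⟩
    · exact fun j _ => node_mem_Icc.2.trans_lt one_lt_two
    · exact fun j hj => by simp [chebDeriv_one_node_s16 (n := n) (l := i + j) (by omega) (by omega)]
  obtain - | @⟨_, _, _, z, hz, -, hfz, -⟩ :=
    hzeros.iterate_deriv ordConnected_Icc (isDerivSeq_chebDeriv _ (1 + k) n) le_rfl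
  exact ⟨z, hz, by simpa [add_comm] using hfz⟩

theorem sub_le_two_mul_sin_of_forall_chebDeriv_ne_zero {n k : ℕ} (hk : k < n) {a b : ℝ}
    (ha : -1 ≤ a) (hab : a ≤ b) (hb : b ≤ 1) (hfree : ∀ z ∈ Ioo a b, chebDeriv n (k + 1) z ≠ 0) :
    b - a ≤ 2 * Real.sin (Real.pi * (k + 1) / (2 * n)) := by
  rcases hab.eq_or_lt with rfl | hab
  · simpa using sin_pi_mul_div_two_mul_nonneg hk
  have hlast : node n n < b := ((node_eq_neg_one (by omega)).trans_le ha).trans_lt hab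
  have hex : ∃ i, node n i < b := ⟨n, hlast⟩
  obtain ⟨i, hin, hib, hbi⟩ : ∃ i < n, node n (i + 1) < b ∧ b ≤ node n i := by
    obtain ⟨i, hi⟩ := Nat.exists_eq_add_one_of_ne_zero (n := Nat.find hex)
      fun h => ((Nat.find_spec hex).trans_le hb).ne (h ▸ node_eq_one)
    have hle : Nat.find hex ≤ n := Nat.find_min' hex hlast
    exact ⟨i, by omega, hi ▸ Nat.find_spec hex, not_lt.1 (Nat.find_min hex (by omega))⟩
  have hgap (j : ℕ) (hj : j + (k + 1) ≤ n) : node n j - node n (j + (k + 1)) ≤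
      2 * Real.sin (Real.pi * (k + 1) / (2 * n)) := by
    simpa using node_sub_node_add_le hj
  rcases lt_or_ge (i + 1 + k) n with hik | hik
  · obtain ⟨z, hz, hfz⟩ := exists_chebDeriv_succ_eq_zero_between_nodes i.succ_pos hik
    have hza : z ≤ a := not_lt.1 fun haz => hfree z ⟨haz, hz.2.trans_lt hib⟩ hfz
    have := hgap i (by omega)
    rw [show i + (k + 1) = i + 1 + k by omega] at this
    linarith [hz.1]
  · have hi : node n i ≤ node n (n - (k + 1)) :=
      (node_strictAntiOn_Iic n).antitoneOn (by grind) (by grind) (by omega)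
    have := hgap (n - (k + 1)) (by omega)
    rw [Nat.sub_add_cancel hk, node_eq_neg_one (by omega)] at this
    linarith

end ZeroGaps

section Bracketing

theorem exists_Icc_mem_disjoint_Ioo_of_isClosed {α : Type*} [ConditionallyCompleteLinearOrder α]
    [TopologicalSpace α] [OrderTopology α] {Z : Set α} (hZ : IsClosed Z) {u v x : α}
    (hu : u ∈ Z) (hv : v ∈ Z) (hux : u ≤ x) (hxv : x ≤ v) :
    ∃ a ∈ Z ∩ Icc u x, ∃ b ∈ Z ∩ Icc x v, Disjoint (Ioo a b) Z := by
  obtain ⟨a, ha, hamax⟩ :=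
    (isCompact_Icc.inter_left hZ).exists_isGreatest ⟨u, hu, le_rfl, hux⟩
  obtain ⟨b, hb, hbmin⟩ :=
    (isCompact_Icc.inter_left hZ).exists_isLeast ⟨v, hv, hxv, le_rfl⟩
  refine ⟨a, ha, b, hb, disjoint_left.2 fun z hz hzZ => ?_⟩
  rcases le_total z x with hzx | hxz
  · exact (hamax ⟨hzZ, ha.2.1.trans hz.1.le, hzx⟩).not_gt hz.1
  · exact (hbmin ⟨hzZ, hxz, hz.2.le.trans hb.2.2⟩).not_gt hz.2

end Bracketing

section Comparison

open Polynomial.Chebyshev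

variable {n k : ℕ} {g : ℕ → ℝ → ℝ}

theorem neg_one_pow_mul_chebDeriv_one_at_neg_one_neg (hn : n ≠ 0) :
    (-1) ^ n * chebDeriv n 1 (-1) < 0 := by
  have := chebDeriv_one_pos_s16 (Nat.one_le_iff_ne_zero.2 hn)
  rw [chebDeriv_neg, ← mul_assoc, ← pow_add, Odd.neg_one_pow ⟨n, by ring⟩]
  linarith

theorem neg_one_pow_mul_chebDeriv_sub_add_pos (hn : n ≠ 0) {φ μ : ℝ} {j : ℕ} (hφ : |φ| < 1)
    (hj : j ≤ n) (hfirst : 0 < j ∨ 0 ≤ μ) (hlast : j < n ∨ μ ≤ 0) :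
    0 < (-1) ^ j * (chebDeriv n 0 (node n j) - φ + μ * chebDeriv n 1 (node n j)) := by
  have hvalue : 0 < 1 - (-1) ^ j * φ := by
    have : |(-1) ^ j * φ| < 1 := by simpa [abs_mul] using hφ
    linarith [(abs_lt.1 this).2]
  have hslope : 0 ≤ μ * ((-1) ^ j * chebDeriv n 1 (node n j)) := by
    rcases j.eq_zero_or_pos with rfl | hj₀
    · have hT := chebDeriv_one_pos_s16 (Nat.one_le_iff_ne_zero.2 hn)
      simpa [node_eq_one] using mul_nonneg (hfirst.resolve_left (lt_irrefl 0)) hT.le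
    rcases hj.eq_or_lt with rfl | hjn
    · rw [node_eq_neg_one hn]
      exact mul_nonneg_of_nonpos_of_nonpos (hlast.resolve_left (lt_irrefl j))
        (neg_one_pow_mul_chebDeriv_one_at_neg_one_neg hn).le
    · simp [chebDeriv_one_node_s16 hj₀ hjn]
  rw [chebDeriv_zero_node hj]
  have hsq : ((-1 : ℝ) ^ j) * (-1) ^ j = 1 := by rw [← mul_pow]; simp
  linear_combination hvalue + hslope - hsq

theorem exists_alternates_chebDeriv_sub_add {φ : ℝ → ℝ} {μ : ℝ} (hn : n ≠ 0)
    (hφ : ∀ x ∈ Icc (-1 : ℝ) 1, |φ x| < 1) :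
    ∃ s, Alternates (Icc (-1) 1) (ConvexCone.strictlyPositive ℝ ℝ)
      (fun x => chebDeriv n 0 x - φ x + μ * chebDeriv n 1 x) n s 2 := by
  have hanti := node_strictAntiOn_Iic n
  rcases le_total 0 μ with hμ | hμ
  · refine ⟨1, .of_strictAntiOn (hanti.mono (Iio_subset_Iic le_rfl)) (fun _ _ => node_mem_Icc)
      (fun _ _ => node_mem_Icc.2.trans_lt one_lt_two) fun i hi => ?_⟩
    rw [one_mul]
    exact neg_one_pow_mul_chebDeriv_sub_add_pos hn (hφ _ node_mem_Icc) hi.le (.inr hμ) (.inl hi)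
  · refine ⟨-1, .of_strictAntiOn (w := fun i => node n (i + 1))
      (fun i hi j hj hij => hanti hi hj (by omega)) (fun _ _ => node_mem_Icc)
      (fun _ _ => node_mem_Icc.2.trans_lt one_lt_two) fun i hi => ?_⟩
    rw [← pow_succ']
    exact neg_one_pow_mul_chebDeriv_sub_add_pos hn (hφ _ node_mem_Icc) hi (.inl i.succ_pos)
      (.inr hμ)

theorem IsDerivSeq.not_double_zero_chebDeriv_sub_add (hg : IsDerivSeq (Icc (-1) 1) n g)
    (h0 : ∀ x ∈ Icc (-1 : ℝ) 1, |g 0 x| ≤ 1) (hσ : ∀ x ∈ Icc (-1 : ℝ) 1, |g n x| ≤ sigmaN n)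
    {θ : ℝ} (hθ : |θ| < 1) (μ : ℝ) (hk : k < n) {w : ℝ} (hw : w ∈ Icc (-1 : ℝ) 1) :
    ¬ (chebDeriv n k w - θ * g k w + μ * chebDeriv n (k + 1) w = 0 ∧
      chebDeriv n (k + 1) w - θ * g (k + 1) w + μ * chebDeriv n (k + 2) w = 0) := by
  have hscale {y r : ℝ} (hr : 0 < r) (hy : |y| ≤ r) : |θ * y| < r := by
    rw [abs_mul]
    nlinarith [abs_nonneg θ, abs_nonneg y]
  obtain ⟨s, hs⟩ := exists_alternates_chebDeriv_sub_add (n := n) (φ := fun x => θ * g 0 x) (μ := μ)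
    (Nat.ne_zero_of_lt hk) fun x hx => hscale one_pos (h0 x hx)
  refine hs.not_double_zero
    (g := fun i x => chebDeriv n i x - θ * g i x + μ * chebDeriv n (i + 1) x) ordConnected_Icc
    (fun i hi x hx => ?_) (fun x hx => ?_) hk hw (hw.2.trans_lt one_lt_two)
  · exact ((hasDerivAt_chebDeriv n i x).hasDerivWithinAt.sub ((hg i hi x hx).const_mul θ)).add
      ((hasDerivAt_chebDeriv n (i + 1) x).hasDerivWithinAt.const_mul μ)
  · rw [chebDeriv_self, chebDeriv_succ_self]
    linarith [(abs_lt.1 (hscale (sigmaN_pos n) (hσ x hx))).2]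

theorem chebDeriv_succ_ne_zero_of_chebDeriv_eq_zero (hk : k < n) {w : ℝ}
    (hw : chebDeriv n k w = 0) : chebDeriv n (k + 1) w ≠ 0 := by
  intro hw'
  refine (IsDerivSeq.not_double_zero_chebDeriv_sub_add (g := fun _ _ => 0)
    (fun _ _ x _ => hasDerivWithinAt_const x _ 0) (by simp) (by simp [(sigmaN_pos n).le])
    (θ := 0) (by simp) 0 hk (Ioo_subset_Icc_self (mem_Ioo_of_chebDeriv_eq_zero hk.le hw))) ?_
  simp [hw, hw']

theorem IsDerivSeq.abs_le_abs_chebDeriv (hg : IsDerivSeq (Icc (-1) 1) n g)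
    (h0 : ∀ x ∈ Icc (-1 : ℝ) 1, |g 0 x| ≤ 1) (hσ : ∀ x ∈ Icc (-1 : ℝ) 1, |g n x| ≤ sigmaN n)
    (hk : k + 2 ≤ n) {w : ℝ} (hw : chebDeriv n (k + 1) w = 0) :
    |g k w| ≤ |chebDeriv n k w| := by
  by_contra! hlt
  have hgk : g k w ≠ 0 := abs_pos.1 ((abs_nonneg _).trans_lt hlt)
  have hT : chebDeriv n (k + 2) w ≠ 0 := chebDeriv_succ_ne_zero_of_chebDeriv_eq_zero hk hw
  have hθ : |chebDeriv n k w / g k w| < 1 := by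
    rwa [abs_div, div_lt_one (abs_pos.2 hgk)]
  refine hg.not_double_zero_chebDeriv_sub_add (k := k) h0 hσ hθ
    (chebDeriv n k w / g k w * g (k + 1) w / chebDeriv n (k + 2) w) (by omega)
    (Ioo_subset_Icc_self (mem_Ioo_of_chebDeriv_eq_zero (by omega : k + 1 ≤ n) hw)) ⟨?_, ?_⟩
  · rw [hw, div_mul_cancel₀ _ hgk]
    ring
  · rw [hw, div_mul_cancel₀ _ hT]
    ring

end Comparison

section Dilation

theorem mapsTo_affine_Icc {l c : ℝ} (hl : 0 ≤ l) (hc : |c| ≤ 1 - l) :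
    MapsTo (fun x => l * x + c) (Icc (-1) 1) (Icc (-1) 1) := by
  obtain ⟨hc₁, hc₂⟩ := abs_le.1 hc
  exact fun x hx => ⟨by nlinarith [hx.1], by nlinarith [hx.2]⟩

theorem exists_dilation_of_mem_Icc {s a b x : ℝ} (ha : a < 1) (hb : -1 < b) (hx : x ∈ Icc a b)
    (hs : s ≤ 1) (hab : b - a ≤ 2 * s) :
    ∃ l c, 1 - s ≤ l ∧ |c| ≤ 1 - l ∧ (x = l * a + c ∨ x = l * b + c) := by
  have hb' : 0 < 1 + b := by linarith
  have ha' : 0 < 1 - a := sub_pos.2 ha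
  rcases le_or_gt ((1 - s) * (1 + b)) (1 + x) with h | h
  · have hl : (1 + x) / (1 + b) ≤ 1 := (div_le_one hb').2 (by linarith [hx.2])
    refine ⟨(1 + x) / (1 + b), (1 + x) / (1 + b) - 1, (le_div_iff₀ hb').2 h, ?_, .inr ?_⟩
    · rw [abs_of_nonpos (by linarith), neg_sub]
    · field
  · have hl : (1 - x) / (1 - a) ≤ 1 := (div_le_one ha').2 (by linarith [hx.1])
    refine ⟨(1 - x) / (1 - a), 1 - (1 - x) / (1 - a), (le_div_iff₀ ha').2 ?_, ?_, .inl ?_⟩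
    · nlinarith [sq_nonneg s]
    · rw [abs_of_nonneg (by linarith)]
    · field

end Dilation

section PointwiseBound

variable {n k : ℕ} {f : ℝ → ℝ}

theorem memW.isDerivSeq {σ : ℝ} (hf : memW n σ f) :
    IsDerivSeq (Icc (-1) 1) n fun i => iteratedDerivWithin i f (Icc (-1) 1) := by
  intro i hi x hx
  simpa only [iteratedDerivWithin_succ] using (hf.1 i hi x hx).hasDerivWithinAt

theorem memW.pow_mul_abs_iteratedDerivWithin_le (hf : memW n (sigmaN n) f) (hk : k + 2 ≤ n)
    {l c w : ℝ} (hl : 0 ≤ l) (hc : |c| ≤ 1 - l) (hw : chebDeriv n (k + 1) w = 0) :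
    l ^ k * |iteratedDerivWithin k f (Icc (-1) 1) (l * w + c)| ≤ |chebDeriv n k w| := by
  have hmaps := mapsTo_affine_Icc hl hc
  have hl1 : l ≤ 1 := by linarith [abs_nonneg c]
  have := (hf.isDerivSeq.comp_affine hmaps).abs_le_abs_chebDeriv
    (fun x hx => by simpa using hf.2.1 _ (hmaps hx)) (fun x hx => ?_) hk hw
  · rwa [abs_mul, abs_of_nonneg (pow_nonneg hl k)] at this
  · rw [abs_mul, abs_of_nonneg (pow_nonneg hl n)]
    exact (mul_le_of_le_one_left (abs_nonneg _) (pow_le_one₀ hl hl1)).trans (hf.2.2 _ (hmaps hx))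

theorem exists_zeros_around_of_abs_le (hk : k < n) {ω x : ℝ}
    (hω : chebDeriv n (k + 1) ω = 0) (hx : |x| ≤ ω) :
    ∃ a b, chebDeriv n (k + 1) a = 0 ∧ chebDeriv n (k + 1) b = 0 ∧ x ∈ Icc a b ∧
      b - a ≤ 2 * Real.sin (Real.pi * (k + 1) / (2 * n)) := by
  obtain ⟨a, ⟨ha, hax⟩, b, ⟨hb, hxb⟩, hfree⟩ := exists_Icc_mem_disjoint_Ioo_of_isClosed
    (isClosed_singleton.preimage (continuous_chebDeriv n (k + 1)))
    (chebDeriv_neg_eq_zero.2 hω) hω (abs_le.1 hx).1 (abs_le.1 hx).2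
  refine ⟨a, b, ha, hb, ⟨hax.2, hxb.1⟩, ?_⟩
  exact sub_le_two_mul_sin_of_forall_chebDeriv_ne_zero hk (mem_Ioo_of_chebDeriv_eq_zero hk ha).1.le
    (hax.2.trans hxb.1) (mem_Ioo_of_chebDeriv_eq_zero hk hb).2.le
    fun z hz hfz => disjoint_left.1 hfree hz hfz

theorem memW.abs_iteratedDerivWithin_le (hf : memW n (sigmaN n) f) (hk : k + 2 ≤ n) {ω x : ℝ}
    (hω : IsGreatest {x : ℝ | chebDeriv n (k + 1) x = 0} ω) (hx : x ∈ Icc (-ω) ω) :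
    |iteratedDerivWithin k f (Icc (-1) 1) x| ≤
      (1 / (1 - Real.sin (Real.pi * (k + 1) / (2 * n)))) ^ k * |chebDeriv n k ω| := by
  have hs : Real.sin (Real.pi * (k + 1) / (2 * n)) < 1 := by
    simpa using sin_pi_mul_div_two_mul_lt_one hk
  obtain ⟨a, b, ha, hb, hxab, hlen⟩ :=
    exists_zeros_around_of_abs_le (by omega) hω.1 (abs_le.2 hx)
  obtain ⟨l, c, hl, hc, hxw⟩ := exists_dilation_of_mem_Icc
    (mem_Ioo_of_chebDeriv_eq_zero (by omega) ha).2 (mem_Ioo_of_chebDeriv_eq_zero (by omega) hb).1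
    hxab hs.le hlen
  obtain ⟨w, hw, rfl⟩ : ∃ w, chebDeriv n (k + 1) w = 0 ∧ x = l * w + c :=
    hxw.elim (⟨a, ha, ·⟩) (⟨b, hb, ·⟩)
  have hl₀ : 0 < l := (sub_pos.2 hs).trans_le hl
  have hwω : |w| ≤ ω := abs_le'.2 ⟨hω.2 hw, hω.2 (chebDeriv_neg_eq_zero.2 hw)⟩
  calc |iteratedDerivWithin k f (Icc (-1) 1) (l * w + c)|
      ≤ (1 / l) ^ k * |chebDeriv n k w| := by
        rw [one_div, inv_pow, inv_mul_eq_div, le_div_iff₀' (pow_pos hl₀ k)]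
        exact hf.pow_mul_abs_iteratedDerivWithin_le hk hl₀.le hc hw
    _ ≤ (1 / (1 - Real.sin (Real.pi * (k + 1) / (2 * n)))) ^ k * |chebDeriv n k ω| := by
        have := abs_chebDeriv_le_of_abs_le (by omega) hwω hw hω.1
        gcongr

end PointwiseBound

theorem mval_upper_bound_interior_sigmaN_general {n k : ℕ} (hk : k + 2 ≤ n) {ω : ℝ}
    (hω : IsGreatest {x : ℝ | chebDeriv n (k + 1) x = 0} ω) :
    ∀ x ∈ Icc (-ω) ω, mval n k x (sigmaN n) ≤
      (1 / (1 - Real.sin (Real.pi * (k + 1) / (2 * n)))) ^ k * |chebDeriv n k ω| := by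
  intro x hx
  have hs : 0 ≤ 1 - Real.sin (Real.pi * (k + 1) / (2 * n)) := sub_nonneg.2 (Real.sin_le_one _)
  refine Real.sSup_le ?_ (by positivity)
  rintro _ ⟨f, hf, rfl⟩
  exact hf.abs_iteratedDerivWithin_le hk hω hx

/-- upper bound for `m_k(x,σ_n)` on `[0, ω_k]`. -/
theorem mval_upper_bound_interior_sigmaN (n k : ℕ) (hn : 3 ≤ n) (hk1 : 1 ≤ k)
    (hk2 : k ≤ n - 2)
    (ωk : ℝ) (hω : IsGreatest {x : ℝ | chebDeriv n (k+1) x = 0} ωk) :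
    ∀ x ∈ Icc (0:ℝ) ωk,
      mval n k x (sigmaN n) ≤
        (1 / (1 - Real.sin (Real.pi * ((k:ℝ) + 1) / (2 * (n:ℝ))))) ^ k *
          |chebDeriv n k ωk| :=
  fun x hx => mval_upper_bound_interior_sigmaN_general (by omega) hω x
    ⟨by linarith [hx.1, hx.2], hx.2⟩
end
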